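/- arXiv:1103.4922 — 4 statements merged into one kernel-verified Lean document; each statement's English description precedes it below -/
import Mathlib

section
/- Let p be an odd prime and let n ≥ 1. The number of similarity classes of primitive nondegenerate quadratic forms in 3 variables integral over ℤ_p whose discriminant ideal equals (pⁿ) is exactly 2n. (Via the correspondence between ternary forms and quaternion orders, this is the number of isomorphism classes of Gorenstein ℤ_p-orders in quaternion algebras with reduced discriminant (pⁿ).) -/
/-- The Gram matrix `M_f` of a quadratic form `f` in `n` variables. -/
noncomputable def gramMatrix {R : Type*} [CommRing R] {n : ℕ}
    (f : QuadraticForm R (Fin n → R)) : Matrix (Fin n) (Fin n) R :=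
  Matrix.of fun i j => QuadraticMap.polar f (Pi.single i 1) (Pi.single j 1)

/-- The ideal generated by the coefficients `a_{ij}` of a quadratic form
`f = Σ_{i ≤ j} a_{ij} X_i X_j`. -/
noncomputable def coeffIdeal {R : Type*} [CommRing R] {n : ℕ}
    (f : QuadraticForm R (Fin n → R)) : Ideal R :=
  Ideal.span ((Set.range fun i => f (Pi.single i 1)) ∪
    (Set.range fun ij : Fin n × Fin n =>
      QuadraticMap.polar f (Pi.single ij.1 1) (Pi.single ij.2 1)))

/-- A quadratic form is primitive if the ideal generated by its coefficients is the whole ring. -/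
noncomputable def IsPrimitiveForm {R : Type*} [CommRing R] {n : ℕ}
    (f : QuadraticForm R (Fin n → R)) : Prop :=
  coeffIdeal f = ⊤

/-- Two quadratic forms are similar if a unit multiple of one is isometric to the other. -/
def SimilarForm {R : Type*} [CommRing R] {n : ℕ}
    (f g : QuadraticForm R (Fin n → R)) : Prop :=
  ∃ u : Rˣ, ((u : R) • f).Equivalent g


namespace Tern

open QuadraticMap

variable {p : ℕ} [hpf : Fact p.Prime]

lemma isUnit_two (hp : p ≠ 2) : IsUnit (2 : ℤ_[p]) := by
  have h : IsUnit (((2 : ℕ) : ℤ_[p])) := by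
    rw [PadicInt.isUnit_iff]
    by_contra h
    have h1 : ‖((2 : ℕ) : ℤ_[p])‖ < 1 := lt_of_le_of_ne (PadicInt.norm_le_one _) h
    rw [PadicInt.norm_lt_one_iff_dvd] at h1
    have h2 : p ∣ 2 := by
      have := (PadicInt.norm_int_lt_one_iff_dvd (p := p) (2 : ℤ)).1 (by
        have h3 := (PadicInt.norm_lt_one_iff_dvd _).2 h1
        simpa using h3)
      exact_mod_cast this
    exact hp ((Nat.prime_dvd_prime_iff_eq hpf.out Nat.prime_two).1 h2)
  simpa using h

lemma exists_min {M : Type*} [AddCommGroup M] [Module ℤ_[p] M] (Q : QuadraticForm ℤ_[p] M) :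
    ∃ v, ∀ x, Q v ∣ Q x := by
  obtain ⟨_, ⟨v, rfl⟩, hv⟩ := (wellFounded_dvdNotUnit (α := ℤ_[p])).has_min
    (Set.range Q) ⟨Q 0, 0, rfl⟩
  refine ⟨v, fun x => ?_⟩
  by_contra h
  rcases ValuationRing.dvd_total (Q v) (Q x) with h1 | h1
  · exact h h1
  · exact hv (Q x) ⟨x, rfl⟩ (dvdNotUnit_of_dvd_of_not_dvd h1 h)

lemma exists_basis (hp : p ≠ 2) (k : ℕ) : ∀ (M : Type) [AddCommGroup M] [Module ℤ_[p] M]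
    [Module.Free ℤ_[p] M] [Module.Finite ℤ_[p] M] (Q : QuadraticForm ℤ_[p] M),
    Module.finrank ℤ_[p] M = k →
    ∃ b : Module.Basis (Fin k) ℤ_[p] M, (∀ i j, i ≠ j → polar Q (b i) (b j) = 0) ∧
      ∀ i j, i ≤ j → Q (b i) ∣ Q (b j) := by
  induction k with
  | zero =>
    intro M _ _ _ _ Q h
    exact ⟨Module.finBasisOfFinrankEq _ _ h, fun i => i.elim0, fun i => i.elim0⟩
  | succ k ih =>
    intro M _ _ _ _ Q h
    obtain ⟨v, hv⟩ := exists_min Q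
    by_cases h0 : Q v = 0
    · have hQ : ∀ x, Q x = 0 := fun x => by
        have := hv x
        rwa [h0, zero_dvd_iff] at this
      refine ⟨Module.finBasisOfFinrankEq _ _ h, fun i j _ => ?_, fun i j _ => ?_⟩
      · simp [polar, hQ]
      · simp [hQ]
    · have h2 := isUnit_two hp
      let N : Submodule ℤ_[p] M := LinearMap.ker (Q.polarBilin v)
      have hN : ∀ x, x ∈ N ↔ polar Q v x = 0 := fun x => by
        simp [N, LinearMap.mem_ker]
      have hvv : polar Q v v = 2 * Q v := by rw [polar_self]; simp
      have hli : ∀ (c : ℤ_[p]), ∀ x ∈ N, c • v + x = 0 → c = 0 := by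
        intro c x hx hc
        have h3 : polar Q v (c • v + x) = 0 := by rw [hc]; simp
        rw [polar_add_right, polar_smul_right, (hN x).1 hx, hvv, add_zero, smul_eq_mul] at h3
        rcases mul_eq_zero.1 h3 with h | h
        · exact h
        · rcases mul_eq_zero.1 h with h | h
          · exact absurd h h2.ne_zero
          · exact absurd h h0
      have hsp : ∀ z : M, ∃ c : ℤ_[p], z + c • v ∈ N := by
        intro z
        have h3 : 2 * Q v ∣ polar Q v z := by
          rw [h2.mul_left_dvd]
          exact dvd_sub (dvd_sub (hv _) (hv _)) (hv _)
        obtain ⟨c, hc⟩ := h3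
        refine ⟨-c, ?_⟩
        rw [hN, polar_add_right, polar_smul_right, hvv, hc, smul_eq_mul]
        ring
      have hfr : Module.finrank ℤ_[p] N = k := by
        have b := Module.Basis.mkFinCons v (Module.finBasis ℤ_[p] N) hli hsp
        have := Module.finrank_eq_card_basis b
        simp at this
        omega
      obtain ⟨b, hb1, hb2⟩ := ih N (Q.comp N.subtype) hfr
      refine ⟨Module.Basis.mkFinCons v b hli hsp, ?_, ?_⟩
      · intro i j hij
        rw [Module.Basis.coe_mkFinCons]
        induction i using Fin.cases with
        | zero =>
          induction j using Fin.cases with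
          | zero => exact absurd rfl hij
          | succ j => simpa using (hN _).1 (b j).2
        | succ i =>
          induction j using Fin.cases with
          | zero => rw [polar_comm]; simpa using (hN _).1 (b i).2
          | succ j =>
            have := hb1 i j (fun h => hij (by rw [h]))
            simpa [polar] using this
      · intro i j hij
        rw [Module.Basis.coe_mkFinCons]
        induction i using Fin.cases with
        | zero => simpa using hv _
        | succ i =>
          induction j using Fin.cases with
          | zero => simp at hij
          | succ j => simpa using hb2 i j (by simpa using hij)

/-- Diagonal ternary form. -/
noncomputable def Dg (x y z : ℤ_[p]) : QuadraticForm ℤ_[p] (Fin 3 → ℤ_[p]) :=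
  weightedSumSquares ℤ_[p] ![x, y, z]

lemma Dg_apply (x y z : ℤ_[p]) (v : Fin 3 → ℤ_[p]) :
    Dg x y z v = x * (v 0 * v 0) + y * (v 1 * v 1) + z * (v 2 * v 2) := by
  simp [Dg, weightedSumSquares_apply, Fin.sum_univ_three]

lemma exists_diag (hp : p ≠ 2) (f : QuadraticForm ℤ_[p] (Fin 3 → ℤ_[p])) :
    ∃ x y z : ℤ_[p], x ∣ y ∧ y ∣ z ∧ f.Equivalent (Dg x y z) := by
  obtain ⟨b, hb1, hb2⟩ := exists_basis hp 3 _ f (by simp)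
  refine ⟨f (b 0), f (b 1), f (b 2), hb2 _ _ (by decide), hb2 _ _ (by decide), ?_⟩
  let _i : Invertible (2 : ℤ_[p]) := (isUnit_two hp).invertible
  have h := basisRepr_eq_of_iIsOrtho f b (by
    intro i j hij
    have := hb1 i j hij
    rw [polar] at this
    simp [Function.onFun, associated_apply, this])
  have h2 : Dg (f (b 0)) (f (b 1)) (f (b 2)) = f.basisRepr b := by
    rw [h, Dg]
    congr 1
    ext i
    fin_cases i <;> rfl
  rw [h2]
  exact ⟨f.isometryEquivBasisRepr b⟩

lemma sim_iff {f g : QuadraticForm ℤ_[p] (Fin 3 → ℤ_[p])} :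
    SimilarForm f g ↔ ∃ (c : ℤ_[p]ˣ) (e : (Fin 3 → ℤ_[p]) ≃ₗ[ℤ_[p]] (Fin 3 → ℤ_[p])),
      ∀ x, g (e x) = c * f x := by
  constructor
  · rintro ⟨u, ⟨e⟩⟩
    exact ⟨u, e.toLinearEquiv, fun x => by
      have := e.map_app x
      simpa using this⟩
  · rintro ⟨u, e, h⟩
    exact ⟨u, ⟨⟨e, fun x => by simpa using h x⟩⟩⟩

lemma sim_equiv : Equivalence (SimilarForm (R := ℤ_[p]) (n := 3)) := by
  constructor
  · intro f
    exact sim_iff.2 ⟨1, LinearEquiv.refl _ _, by simp⟩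
  · intro f g h
    obtain ⟨c, e, h⟩ := sim_iff.1 h
    refine sim_iff.2 ⟨c⁻¹, e.symm, fun x => ?_⟩
    have := h (e.symm x)
    rw [LinearEquiv.apply_symm_apply] at this
    rw [this]
    simp
  · intro f g k h h'
    obtain ⟨c, e, h⟩ := sim_iff.1 h
    obtain ⟨c', e', h'⟩ := sim_iff.1 h'
    refine sim_iff.2 ⟨c' * c, e.trans e', fun x => ?_⟩
    simp [h', h, mul_assoc]

lemma det_rel {f g : QuadraticForm ℤ_[p] (Fin 3 → ℤ_[p])} (c : ℤ_[p])
    (e : (Fin 3 → ℤ_[p]) ≃ₗ[ℤ_[p]] (Fin 3 → ℤ_[p])) (h : ∀ x, g (e x) = c * f x) :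
    ∃ d : ℤ_[p], IsUnit d ∧ c ^ 3 * (gramMatrix f).det = d ^ 2 * (gramMatrix g).det := by
  have key : ∀ f : QuadraticForm ℤ_[p] (Fin 3 → ℤ_[p]),
      gramMatrix f = LinearMap.toMatrix₂' ℤ_[p] (polarBilin f) := by
    intro f
    ext i j
    simp [gramMatrix, LinearMap.toMatrix₂'_apply]
  refine ⟨(LinearMap.toMatrix' (e : (Fin 3 → ℤ_[p]) →ₗ[ℤ_[p]] (Fin 3 → ℤ_[p]))).det, ?_, ?_⟩
  · rw [LinearMap.det_toMatrix']
    exact LinearEquiv.isUnit_det' e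
  · have h1 : c • gramMatrix f = (LinearMap.toMatrix' (e : (Fin 3 → ℤ_[p]) →ₗ[ℤ_[p]] (Fin 3 → ℤ_[p]))).transpose
        * gramMatrix g * LinearMap.toMatrix' (e : (Fin 3 → ℤ_[p]) →ₗ[ℤ_[p]] (Fin 3 → ℤ_[p])) := by
      rw [key g, ← LinearMap.toMatrix₂'_compl₁₂]
      ext i j
      simp [gramMatrix, LinearMap.toMatrix₂'_apply, polar, ← map_add, h]
      ring
    have h2 := congrArg Matrix.det h1
    rw [Matrix.det_smul, Matrix.det_mul, Matrix.det_mul, Matrix.det_transpose] at h2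
    simp only [Fintype.card_fin] at h2
    rw [h2]; ring

lemma det_Dg (x y z : ℤ_[p]) : (gramMatrix (Dg x y z)).det = 8 * x * y * z := by
  simp [Matrix.det_fin_three, gramMatrix, polar, Dg_apply, Pi.single_apply]
  ring

lemma sim_mat {f g : QuadraticForm ℤ_[p] (Fin 3 → ℤ_[p])} {c : ℤ_[p]} (hc : IsUnit c)
    (A : Matrix (Fin 3) (Fin 3) ℤ_[p]) (hA : IsUnit A.det)
    (h : ∀ x, g (A.mulVec x) = c * f x) : SimilarForm f g := by
  refine sim_iff.2 ⟨hc.unit, Matrix.toLin'OfInv (Matrix.nonsing_inv_mul A hA)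
    (Matrix.mul_nonsing_inv A hA), fun x => ?_⟩
  have := h x
  rw [← Matrix.toLin'_apply] at this
  exact this

lemma sim_diag {x y z x' y' z' c α β γ : ℤ_[p]} (hc : IsUnit c) (hα : IsUnit α) (hβ : IsUnit β)
    (hγ : IsUnit γ) (hx : x' * α ^ 2 = c * x) (hy : y' * β ^ 2 = c * y)
    (hz : z' * γ ^ 2 = c * z) : SimilarForm (Dg x y z) (Dg x' y' z') := by
  refine sim_mat hc !![α, 0, 0; 0, β, 0; 0, 0, γ] ?_ ?_
  · simp [Matrix.det_fin_three, hα, hβ, hγ]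
  · intro v
    simp only [Dg_apply, Matrix.mulVec, dotProduct, Fin.sum_univ_three]
    simp
    linear_combination (v 0) ^ 2 * hx + (v 1) ^ 2 * hy + (v 2) ^ 2 * hz

lemma sim_swap12 (x y z : ℤ_[p]) : SimilarForm (Dg x y z) (Dg y x z) := by
  refine sim_mat isUnit_one !![0, 1, 0; 1, 0, 0; 0, 0, 1] ?_ ?_
  · simp [Matrix.det_fin_three]
  · intro v
    simp only [Dg_apply, Matrix.mulVec, dotProduct, Fin.sum_univ_three]
    simp
    ring

lemma sim_swap23 (x y z : ℤ_[p]) : SimilarForm (Dg x y z) (Dg x z y) := by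
  refine sim_mat isUnit_one !![1, 0, 0; 0, 0, 1; 0, 1, 0] ?_ ?_
  · simp [Matrix.det_fin_three]
  · intro v
    simp only [Dg_apply, Matrix.mulVec, dotProduct, Fin.sum_univ_three]
    simp
    ring

lemma sim_rot12 {X Y : ℤ_[p]} (h : IsUnit (X ^ 2 + Y ^ 2)) (x z : ℤ_[p]) :
    SimilarForm (Dg ((X ^ 2 + Y ^ 2) * x) ((X ^ 2 + Y ^ 2) * x) z) (Dg x x z) := by
  refine sim_mat isUnit_one !![X, -Y, 0; Y, X, 0; 0, 0, 1] ?_ ?_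
  · simp [Matrix.det_fin_three]
    convert h using 1; ring
  · intro v
    simp only [Dg_apply, Matrix.mulVec, dotProduct, Fin.sum_univ_three]
    simp
    ring

lemma sim_rot23 {X Y : ℤ_[p]} (h : IsUnit (X ^ 2 + Y ^ 2)) (x z : ℤ_[p]) :
    SimilarForm (Dg z ((X ^ 2 + Y ^ 2) * x) ((X ^ 2 + Y ^ 2) * x)) (Dg z x x) := by
  refine sim_mat isUnit_one !![1, 0, 0; 0, X, -Y; 0, Y, X] ?_ ?_
  · simp [Matrix.det_fin_three]
    convert h using 1; ring
  · intro v
    simp only [Dg_apply, Matrix.mulVec, dotProduct, Fin.sum_univ_three]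
    simp
    ring

/-- The quadratic character of the residue. -/
noncomputable def chi (x : ℤ_[p]) : ℤ := quadraticChar (ZMod p) (PadicInt.toZMod x)

lemma toZMod_eq_zero {x : ℤ_[p]} : PadicInt.toZMod x = 0 ↔ (p : ℤ_[p]) ∣ x := by
  rw [← RingHom.mem_ker, PadicInt.ker_toZMod, PadicInt.maximalIdeal_eq_span_p,
    Ideal.mem_span_singleton]

lemma isUnit_iff_toZMod {x : ℤ_[p]} : IsUnit x ↔ PadicInt.toZMod x ≠ 0 := by
  rw [Ne, ← RingHom.mem_ker, PadicInt.ker_toZMod, IsLocalRing.mem_maximalIdeal, mem_nonunits_iff,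
    not_not]

lemma chi_mul (x y : ℤ_[p]) : chi (x * y) = chi x * chi y := by
  rw [chi, map_mul, map_mul]; rfl

lemma chi_ne_zero {x : ℤ_[p]} : chi x ≠ 0 ↔ IsUnit x := by
  rw [isUnit_iff_toZMod, chi, Ne, quadraticChar_eq_zero_iff]

lemma chi_dich {x : ℤ_[p]} (hx : IsUnit x) : chi x = 1 ∨ chi x = -1 :=
  quadraticChar_dichotomy (isUnit_iff_toZMod.1 hx)

lemma chi_sq {x : ℤ_[p]} (hx : IsUnit x) : chi (x ^ 2) = 1 := by
  rw [chi, map_pow]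
  exact quadraticChar_sq_one' (isUnit_iff_toZMod.1 hx)

lemma chi_one : chi (1 : ℤ_[p]) = 1 := by simp [chi]

lemma chi_add_p (x y : ℤ_[p]) : chi (x + (p : ℤ_[p]) * y) = chi x := by
  simp only [chi, map_add, map_mul, map_natCast, CharP.cast_eq_zero, zero_mul, add_zero]

lemma chi_key {u v m c r : ℤ_[p]} (hu : IsUnit u) (hc : IsUnit c)
    (h : c ^ 2 * u = v * m ^ 2 + p * r) : chi u = chi v := by
  have h1 := congrArg chi h
  rw [chi_add_p, chi_mul, chi_sq hc, one_mul, chi_mul] at h1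
  have hm : IsUnit m := by
    have h2 : chi (m ^ 2) ≠ 0 := fun h2 => by
      rw [h2, mul_zero] at h1
      exact chi_ne_zero.2 hu h1
    exact isUnit_pow_iff two_ne_zero |>.1 (chi_ne_zero.1 h2)
  rw [chi_sq hm, mul_one] at h1
  exact h1

lemma sqrt_of_chi (hp : p ≠ 2) {x : ℤ_[p]} (hx : IsUnit x) (h : chi x = 1) :
    ∃ y, IsUnit y ∧ y ^ 2 = x := by
  have h0 := isUnit_iff_toZMod.1 hx
  obtain ⟨r, hr⟩ := (quadraticChar_one_iff_isSquare h0).1 h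
  obtain ⟨a, rfl⟩ := ZMod.ringHom_surjective (PadicInt.toZMod (p := p)) r
  have ha : IsUnit a := by
    rw [isUnit_iff_toZMod]
    intro h1
    rw [h1] at hr
    exact h0 (by simpa using hr)
  have h2 : IsUnit (2 * a) := (isUnit_two hp).mul ha
  obtain ⟨z, hz, -⟩ := hensels_lemma (p := p) (R := ℤ_[p])
    (F := (Polynomial.X ^ 2 - Polynomial.C x : Polynomial ℤ_[p])) (a := a) (by
      have e1 : ‖a ^ 2 - x‖ < 1 := by
        rw [PadicInt.norm_lt_one_iff_dvd, ← toZMod_eq_zero]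
        rw [map_sub, map_pow, hr]; ring
      have e2 := PadicInt.isUnit_iff.1 h2
      rw [norm_mul] at e2
      have e3 : (1 : ℤ_[p]) + 1 = 2 := by norm_num
      simpa [e2, e3] using e1)
  have hz' : z ^ 2 = x := by
    simpa [sub_eq_zero] using hz
  exact ⟨z, isUnit_pow_iff two_ne_zero |>.1 (hz' ▸ hx), hz'⟩

lemma exists_eps (hp : p ≠ 2) : ∃ X Y : ℤ_[p], chi (X ^ 2 + Y ^ 2) = -1 := by
  obtain ⟨a, ha⟩ := quadraticChar_exists_neg_one (F := ZMod p) (by rwa [ZMod.ringChar_zmod_n])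
  obtain ⟨x, y, h⟩ := ZMod.sq_add_sq p a
  obtain ⟨X, rfl⟩ := ZMod.ringHom_surjective (PadicInt.toZMod (p := p)) x
  obtain ⟨Y, rfl⟩ := ZMod.ringHom_surjective (PadicInt.toZMod (p := p)) y
  refine ⟨X, Y, ?_⟩
  rw [← ha, ← h, chi]
  simp

/-- Representatives of square classes. -/
noncomputable def E (ε : ℤ_[p]) (s : Bool) : ℤ_[p] := if s then ε else 1

lemma chi_E {ε : ℤ_[p]} (h : chi ε = -1) (s : Bool) : chi (E ε s) = if s then -1 else 1 := by
  cases s <;> simp [E, h, chi_one]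

lemma unit_E {ε : ℤ_[p]} (h : chi ε = -1) (s : Bool) : IsUnit (E ε s) := by
  rw [← chi_ne_zero, chi_E h]; cases s <;> simp

lemma exists_E (hp : p ≠ 2) {ε : ℤ_[p]} (h : chi ε = -1) {x : ℤ_[p]} (hx : IsUnit x) :
    ∃ s y, IsUnit y ∧ E ε s * y ^ 2 = x := by
  have he : IsUnit ε := chi_ne_zero.1 (by rw [h]; decide)
  rcases chi_dich hx with h1 | h1
  · obtain ⟨y, hy, h2⟩ := sqrt_of_chi hp hx h1
    exact ⟨false, y, hy, by simpa [E] using h2⟩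
  · obtain ⟨y, hy, h2⟩ := sqrt_of_chi hp (he.mul hx) (by rw [chi_mul, h, h1]; rfl)
    obtain ⟨u, rfl⟩ := he
    refine ⟨true, ↑u⁻¹ * y, (Units.isUnit _).mul hy, ?_⟩
    simp only [E, if_true]
    rw [mul_pow, h2]
    have : (u : ℤ_[p]) * ↑u⁻¹ = 1 := by simp
    linear_combination (x * (u * ↑u⁻¹ + 1)) * this

lemma inv1 (hp : p ≠ 2) {x y x' y' : ℤ_[p]} {a b a' b' : ℕ} (hx : IsUnit x) (hab' : a' ≤ b')
    (h : SimilarForm (Dg (p := p) 1 (x * p ^ a) (y * p ^ b)) (Dg (p := p) 1 (x' * p ^ a') (y' * p ^ b'))) :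
    ∃ c d X Y m r : ℤ_[p], IsUnit c ∧ IsUnit d ∧
      c ^ 2 * (x * p ^ a) = x' * p ^ a' * m ^ 2 + p ^ b' * r ∧
      c = X ^ 2 + p ^ a' * Y ∧ c ^ 3 * (x * p ^ a * (y * p ^ b))
        = d ^ 2 * (x' * p ^ a' * (y' * p ^ b')) := by
  obtain ⟨c, e, h⟩ := sim_iff.1 h
  obtain ⟨d, hd, hdet⟩ := det_rel _ _ h
  have hu : IsUnit (8 : ℤ_[p]) := by
    have := (isUnit_two hp).pow 3
    norm_num at this
    exact this
  rw [det_Dg, det_Dg] at hdet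
  have e0 := h (Pi.single 0 1)
  have e1 := h (Pi.single 1 1)
  have e01 := h (Pi.single 0 1 + Pi.single 1 1)
  obtain ⟨t, rfl⟩ := Nat.exists_eq_add_of_le hab'
  rw [map_add] at e01
  generalize e (Pi.single 0 1) = v at *
  generalize e (Pi.single 1 1) = w at *
  simp [Dg_apply] at e0 e1 e01
  refine ⟨c, d, v 0, x' * (v 1 * v 1) + y' * p ^ t * (v 2 * v 2), v 0 * w 1 - v 1 * w 0,
    y' * (v 0 * w 2 - v 2 * w 0) ^ 2 + x' * p ^ a' * y' * (v 1 * w 2 - v 2 * w 1) ^ 2,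
    c.isUnit, hd, ?_, ?_, ?_⟩
  · have h01 : 2 * (v 0 * w 0 + x' * p ^ a' * (v 1 * w 1) + y' * p ^ (a' + t) * (v 2 * w 2)) = 0 := by
      linear_combination e01 - e0 - e1
    have h02 := (mul_eq_zero.1 h01).resolve_left (isUnit_two hp).ne_zero
    have h3 : (c : ℤ_[p]) ^ 2 * (x * p ^ a) = c * (c * (x * p ^ a)) := by ring
    rw [h3, ← e1]
    nth_rewrite 1 [← e0]
    linear_combination (v 0 * w 0 + x' * p ^ a' * (v 1 * w 1) + y' * p ^ (a' + t) * (v 2 * w 2)) * h02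
  · rw [← e0]; ring
  · apply hu.mul_left_cancel
    linear_combination hdet

lemma p_ne : (p : ℤ_[p]) ≠ 0 := PadicInt.prime_p.ne_zero

lemma le_of_pow_dvd {a b : ℕ} {u : ℤ_[p]} (hu : IsUnit u) (h : (p : ℤ_[p]) ^ a ∣ u * p ^ b) :
    a ≤ b := by
  rw [hu.dvd_mul_left] at h
  exact (pow_dvd_pow_iff p_ne PadicInt.prime_p.not_isUnit).1 h

lemma inv_le (hp : p ≠ 2) {x y x' y' : ℤ_[p]} {a b a' b' : ℕ} (hx : IsUnit x) (hab' : a' ≤ b')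
    (h : SimilarForm (Dg (p := p) 1 (x * p ^ a) (y * p ^ b)) (Dg (p := p) 1 (x' * p ^ a') (y' * p ^ b'))) :
    a' ≤ a := by
  obtain ⟨c, d, X, Y, m, r, hc, hd, h1, h2, h3⟩ := inv1 hp hx hab' h
  apply le_of_pow_dvd ((hc.pow 2).mul hx)
  rw [mul_assoc, h1]
  exact dvd_add (Dvd.intro_left _ rfl |>.mul_right _) ((pow_dvd_pow _ hab').mul_right _)

lemma inv_all (hp : p ≠ 2) {x y x' y' : ℤ_[p]} {a b a' b' : ℕ} (hx : IsUnit x) (hy : IsUnit y)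
    (hx' : IsUnit x') (hab : a ≤ b) (hab' : a' ≤ b') (hs : a + b = a' + b')
    (h : SimilarForm (Dg (p := p) 1 (x * p ^ a) (y * p ^ b)) (Dg (p := p) 1 (x' * p ^ a') (y' * p ^ b'))) :
    a = a' ∧ (a < b → chi x = chi x') ∧ (0 < a → chi (x * y) = chi (x' * y')) := by
  have ha : a = a' := le_antisymm (inv_le hp hx' hab (sim_equiv.symm h)) (inv_le hp hx hab' h)
  subst ha
  have hb : b = b' := by omega
  subst hb
  obtain ⟨c, d, X, Y, m, r, hc, hd, h1, h2, h3⟩ := inv1 hp hx hab' h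
  refine ⟨rfl, fun hlt => ?_, fun hpos => ?_⟩
  · obtain ⟨t, rfl⟩ := Nat.exists_eq_add_of_lt hlt
    apply chi_key (m := m) (r := p ^ t * r) hx hc
    apply mul_left_cancel₀ (pow_ne_zero a (p_ne (p := p)))
    linear_combination h1
  · obtain ⟨t, rfl⟩ := Nat.exists_eq_add_of_lt hpos
    have hc1 : chi c = 1 := by
      have : chi c = chi (1 : ℤ_[p]) :=
        chi_key (c := 1) (m := X) (r := p ^ t * Y) hc isUnit_one (by linear_combination h2)
      rw [this, chi_one]
    have h4 : c ^ 2 * (c * (x * y)) = d ^ 2 * (x' * y') := by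
      apply mul_left_cancel₀ (pow_ne_zero (0 + t + 1 + b) (p_ne (p := p)))
      linear_combination h3
    have h5 := congrArg chi h4
    rw [chi_mul, chi_sq hc, chi_mul c, hc1, chi_mul (d ^ 2), chi_sq hd] at h5
    simpa using h5

lemma coeff_le {f : QuadraticForm ℤ_[p] (Fin 3 → ℤ_[p])} {d : ℤ_[p]} (h : ∀ x, d ∣ f x) :
    coeffIdeal f ≤ Ideal.span {d} := by
  rw [coeffIdeal, Ideal.span_le]
  rintro _ (⟨i, rfl⟩ | ⟨ij, rfl⟩)
  · exact Ideal.mem_span_singleton.2 (h _)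
  · exact Ideal.mem_span_singleton.2 (dvd_sub (dvd_sub (h _) (h _)) (h _))

lemma normal_form (hp : p ≠ 2) {ε : ℤ_[p]} (hε : chi ε = -1) {n : ℕ}
    (f : QuadraticForm ℤ_[p] (Fin 3 → ℤ_[p])) (h1 : IsPrimitiveForm f)
    (h2 : (gramMatrix f).det ≠ 0)
    (h3 : Ideal.span {(gramMatrix f).det} = Ideal.span {(p : ℤ_[p]) ^ n}) :
    ∃ (a b : ℕ) (s t : Bool), a ≤ b ∧ a + b = n ∧
      SimilarForm f (Dg (p := p) 1 (E ε s * p ^ a) (E ε t * p ^ b)) := by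
  obtain ⟨x, y, z, hxy, hyz, ⟨e⟩⟩ := exists_diag hp f
  have he : ∀ v, Dg x y z (e.toLinearEquiv v) = (1 : ℤ_[p]) * f v := fun v => by
    rw [one_mul]; exact e.map_app v
  have hsim : SimilarForm f (Dg x y z) := sim_iff.2 ⟨1, e.toLinearEquiv, by simpa using he⟩
  have hx : IsUnit x := by
    rw [← Ideal.span_singleton_eq_top, ← top_le_iff, ← show coeffIdeal f = ⊤ from h1]
    apply coeff_le
    intro v
    rw [← one_mul (f v), ← he, Dg_apply]
    exact dvd_add (dvd_add (Dvd.intro _ rfl) (hxy.mul_right _)) ((hxy.trans hyz).mul_right _)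
  obtain ⟨d, hd, hdet⟩ := det_rel _ _ he
  rw [det_Dg, one_pow, one_mul] at hdet
  have hy0 : y ≠ 0 := by
    rintro rfl
    apply h2; rw [hdet]; ring
  have hz0 : z ≠ 0 := by
    rintro rfl
    apply h2; rw [hdet]; ring
  have hu : IsUnit (8 : ℤ_[p]) := by
    have := (isUnit_two hp).pow 3
    norm_num at this
    exact this
  have hy := PadicInt.unitCoeff_spec hy0
  have hz := PadicInt.unitCoeff_spec hz0
  generalize PadicInt.unitCoeff hy0 = u at hy
  generalize PadicInt.unitCoeff hz0 = w at hz
  generalize PadicInt.valuation y = a at hy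
  generalize PadicInt.valuation z = b at hz
  subst hy hz
  have hab : a ≤ b := by
    apply le_of_pow_dvd w.isUnit
    exact (Dvd.intro_left _ rfl).trans hyz
  have hassoc : Associated ((p : ℤ_[p]) ^ (a + b)) (p ^ n) := by
    rw [← Ideal.span_singleton_eq_span_singleton, ← h3, Ideal.span_singleton_eq_span_singleton]
    have hU : IsUnit (d ^ 2 * 8 * x * u * w) :=
      ((((hd.pow 2).mul hu).mul hx).mul u.isUnit).mul w.isUnit
    refine ⟨hU.unit, ?_⟩
    rw [hdet, IsUnit.unit_spec]
    ring
  have hn : a + b = n := le_antisymm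
    ((pow_dvd_pow_iff p_ne PadicInt.prime_p.not_isUnit).1 hassoc.dvd)
    ((pow_dvd_pow_iff p_ne PadicInt.prime_p.not_isUnit).1 hassoc.symm.dvd)
  obtain ⟨v, rfl⟩ := hx
  obtain ⟨s, α, hα, hs⟩ := exists_E hp hε (v⁻¹ * u).isUnit
  obtain ⟨t, β, hβ, ht⟩ := exists_E hp hε (v⁻¹ * w).isUnit
  refine ⟨a, b, s, t, hab, hn, sim_equiv.trans hsim ?_⟩
  refine sim_diag (v⁻¹).isUnit isUnit_one hα hβ (by simp) ?_ ?_
  · push_cast at hs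
    linear_combination (p : ℤ_[p]) ^ a * hs
  · push_cast at ht
    linear_combination (p : ℤ_[p]) ^ b * ht

/-- The family of representatives. -/
noncomputable def Rep (ε : ℤ_[p]) (n : ℕ) (q : Fin n × Bool) :
    QuadraticForm ℤ_[p] (Fin 3 → ℤ_[p]) :=
  Dg (p := p) 1 (E ε q.2 * p ^ (min q.1.1 (n - q.1.1)))
    (E ε (decide (n < 2 * q.1.1)) * p ^ (max q.1.1 (n - q.1.1)))

lemma Rep_mem (hp : p ≠ 2) {ε : ℤ_[p]} (hε : chi ε = -1) (n : ℕ) (q : Fin n × Bool) :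
    IsPrimitiveForm (Rep ε n q) ∧ (gramMatrix (Rep ε n q)).det ≠ 0 ∧
      Ideal.span {(gramMatrix (Rep ε n q)).det} = Ideal.span {(p : ℤ_[p]) ^ n} := by
  have hu : IsUnit (8 : ℤ_[p]) := by
    have := (isUnit_two hp).pow 3
    norm_num at this
    exact this
  have hU : IsUnit (8 * E ε q.2 * E ε (decide (n < 2 * q.1.1))) :=
    (hu.mul (unit_E hε _)).mul (unit_E hε _)
  have hdet : (gramMatrix (Rep ε n q)).det
      = p ^ n * (8 * E ε q.2 * E ε (decide (n < 2 * q.1.1))) := by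
    have hn : n = min q.1.1 (n - q.1.1) + max q.1.1 (n - q.1.1) := by
      have := q.1.2
      omega
    rw [Rep, det_Dg]
    have : (p : ℤ_[p]) ^ n = p ^ (min q.1.1 (n - q.1.1)) * p ^ (max q.1.1 (n - q.1.1)) := by
      rw [← pow_add, ← hn]
    rw [this]
    ring
  refine ⟨?_, ?_, ?_⟩
  · rw [IsPrimitiveForm, Ideal.eq_top_iff_one]
    apply Ideal.subset_span
    left
    refine ⟨0, ?_⟩
    simp [Rep, Dg_apply]
  · rw [hdet]
    exact mul_ne_zero (pow_ne_zero _ p_ne) hU.ne_zero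
  · rw [hdet, Ideal.span_singleton_eq_span_singleton]
    exact Associated.symm ⟨hU.unit, by simp⟩

lemma Rep_inj (hp : p ≠ 2) {ε : ℤ_[p]} (hε : chi ε = -1) (n : ℕ) (q q' : Fin n × Bool)
    (h : SimilarForm (Rep ε n q) (Rep ε n q')) : q = q' := by
  obtain ⟨⟨j, hj⟩, s⟩ := q
  obtain ⟨⟨j', hj'⟩, s'⟩ := q'
  obtain ⟨h1, h2, h3⟩ := inv_all hp (unit_E hε _) (unit_E hε _) (unit_E hε _) (by omega) (by omega)
    (by omega) h
  simp only [chi_mul, chi_E hε] at h1 h2 h3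
  have hs : s = s' := by
    by_cases hlt : min j (n - j) < max j (n - j)
    · have := h2 hlt
      revert this
      cases s <;> cases s' <;> simp
    · have := h3 (by omega)
      have e1 : ¬ (n < 2 * j) := by omega
      have e2 : ¬ (n < 2 * j') := by omega
      simp only [e1, e2, decide_false] at this
      revert this
      cases s <;> cases s' <;> simp
  subst hs
  have hjj : j = j' := by
    by_contra hne
    have h4 := h3 (by omega)
    have h5 : (decide (n < 2 * j)) = (decide (n < 2 * j')) := by
      revert h4
      generalize decide (n < 2 * j) = x
      generalize decide (n < 2 * j') = y
      cases s <;> cases x <;> cases y <;> simp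
    have h6 : n < 2 * j ↔ n < 2 * j' := by simpa using h5
    omega
  subst hjj
  rfl

lemma Rep_of (ε : ℤ_[p]) (n j a b : ℕ) (hj : j < n) (s t : Bool) (ha : min j (n - j) = a)
    (hb : max j (n - j) = b) (ht : decide (n < 2 * j) = t) :
    Rep ε n (⟨j, hj⟩, s) = Dg (p := p) 1 (E ε s * p ^ a) (E ε t * p ^ b) := by
  subst ha hb ht
  rfl

lemma Rep_surj (hp : p ≠ 2) {X Y : ℤ_[p]} (hε : chi (X ^ 2 + Y ^ 2) = -1) {n : ℕ} (hn : 1 ≤ n)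
    (f : QuadraticForm ℤ_[p] (Fin 3 → ℤ_[p])) (h1 : IsPrimitiveForm f)
    (h2 : (gramMatrix f).det ≠ 0)
    (h3 : Ideal.span {(gramMatrix f).det} = Ideal.span {(p : ℤ_[p]) ^ n}) :
    ∃ q, SimilarForm f (Rep (X ^ 2 + Y ^ 2) n q) := by
  obtain ⟨a, b, s, t, hab, hs, hf⟩ := normal_form hp hε f h1 h2 h3
  have hu : IsUnit (X ^ 2 + Y ^ 2) := chi_ne_zero.1 (by rw [hε]; decide)
  cases t with
  | false =>
    refine ⟨(⟨a, by omega⟩, s), ?_⟩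
    rwa [Rep_of _ n a a b (by omega) s false (by omega) (by omega) (by simp; omega)]
  | true =>
    by_cases ha : a = 0
    · subst ha
      refine ⟨(⟨0, by omega⟩, s), sim_equiv.trans hf ?_⟩
      rw [Rep_of _ n 0 0 b (by omega) s false (by omega) (by omega) (by simp)]
      cases s with
      | false =>
        refine sim_equiv.trans (sim_diag (x' := (X ^ 2 + Y ^ 2) * 1) (y' := (X ^ 2 + Y ^ 2) * 1)
          (z' := p ^ b)
          hu isUnit_one isUnit_one hu ?_ ?_ ?_)
          (sim_equiv.trans (sim_rot12 hu 1 _) ?_)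
        · ring
        · simp [E]
        · simp [E]; ring
        · simp only [E]
          simpa using sim_equiv.refl _
      | true =>
        refine sim_equiv.trans (sim_diag (x' := (X ^ 2 + Y ^ 2)) (y' := 1)
          (z' := p ^ b)
          hu isUnit_one hu hu ?_ ?_ ?_)
          (sim_equiv.trans (sim_swap12 _ _ _) ?_)
        · ring
        · simp [E]; ring
        · simp [E]; ring
        · simp only [E]
          simpa using sim_equiv.refl _
    · by_cases hlt : a < b
      · refine ⟨(⟨b, by omega⟩, s), ?_⟩
        rwa [Rep_of _ n b a b (by omega) s true (by omega) (by omega) (by simp; omega)]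
      · obtain rfl : a = b := by omega
        refine ⟨(⟨a, by omega⟩, !s), sim_equiv.trans hf ?_⟩
        rw [Rep_of _ n a a a (by omega) (!s) false (by omega) (by omega) (by simp; omega)]
        cases s with
        | false => exact sim_swap23 _ _ _
        | true =>
          have := sim_rot23 hu ((p : ℤ_[p]) ^ a) 1
          simpa [E] using this

end Tern

theorem stmt_15 (p : ℕ) [Fact p.Prime] (hp : p ≠ 2) (n : ℕ) (hn : 1 ≤ n) :
    Nat.card (Quot (fun (f g : {f : QuadraticForm ℤ_[p] (Fin 3 → ℤ_[p]) //
        IsPrimitiveForm f ∧ (gramMatrix f).det ≠ 0 ∧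
          Ideal.span {(gramMatrix f).det} = Ideal.span {(p : ℤ_[p]) ^ n}}) =>
      SimilarForm f.1 g.1)) = 2 * n := by
  obtain ⟨X, Y, hε⟩ := Tern.exists_eps hp
  have key : Function.Bijective (fun q : Fin n × Bool =>
      (Quot.mk _ ⟨Tern.Rep (X ^ 2 + Y ^ 2) n q, Tern.Rep_mem hp hε n q⟩ :
      Quot (fun (f g : {f : QuadraticForm ℤ_[p] (Fin 3 → ℤ_[p]) //
        IsPrimitiveForm f ∧ (gramMatrix f).det ≠ 0 ∧
          Ideal.span {(gramMatrix f).det} = Ideal.span {(p : ℤ_[p]) ^ n}}) =>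
      SimilarForm f.1 g.1))) := by
    constructor
    · intro q q' h
      have h' := Quot.eqvGen_exact h
      have h' := (Equivalence.eqvGen_iff (Tern.sim_equiv.comap Subtype.val)).1 h'
      exact Tern.Rep_inj hp hε n q q' h'
    · intro F
      induction F using Quot.ind with
      | mk f =>
        obtain ⟨q, hq⟩ := Tern.Rep_surj hp hε hn f.1 f.2.1 f.2.2.1 f.2.2.2
        exact ⟨q, Quot.sound (Tern.sim_equiv.symm hq)⟩
  rw [← Nat.card_congr (Equiv.ofBijective _ key)]
  simp [mul_comm]
end

section
/- Let p be an odd prime and let n ≥ 0. The number of similarity classes of nondegenerate quadratic forms in 3 variables integral over ℤ_p whose discriminant ideal equals (pⁿ) is (n² + 3n + 2 + c)/3, where c = 1 if 3 divides n and c = 0 otherwise. (Via the correspondence between ternary forms and quaternion orders, this is the total number of isomorphism classes of ℤ_p-orders in quaternion algebras with reduced discriminant (pⁿ).) -/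
/-- Parameter set for similarity classes. -/
abbrev SimData (n : ℕ) : Type := {t : ℕ × ℤ × ℤ // 3 * t.1 + 2 * t.2.1.natAbs + t.2.2.natAbs = n}

def simDataZero : SimData 0 ≃ Fin 1 where
  toFun _ := 0
  invFun _ := ⟨(0, 0, 0), by simp⟩
  left_inv := by
    rintro ⟨⟨a, x, y⟩, h⟩
    simp only at h
    apply Subtype.ext
    simp only [Prod.mk.injEq]
    omega
  right_inv := by intro x; exact Subsingleton.elim _ _

abbrev diamond (m : ℕ) : Type := {t : ℤ × ℤ // 2 * t.1.natAbs + t.2.natAbs = m}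

def diamondEquiv (m : ℕ) (hm : 0 < m) : diamond m ≃ Fin (2 * m) where
  toFun t := if h : 0 ≤ t.1.1 then ⟨((m - t.1.2) / 2).toNat, by
      obtain ⟨⟨x, y⟩, ht⟩ := t
      simp only at *
      omega⟩
    else ⟨m + ((m - t.1.2) / 2).toNat, by
      obtain ⟨⟨x, y⟩, ht⟩ := t
      simp only at *
      omega⟩
  invFun k := if h : k.1 < m + 1 then ⟨((min k.1 (m - k.1) : ℕ), (m : ℤ) - 2 * k.1), by
      obtain ⟨k, hk⟩ := k
      simp only at *
      omega⟩
    else ⟨(-(min (k.1 - m) (m - (k.1 - m)) : ℕ), (m : ℤ) - 2 * (k.1 - m : ℕ)), by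
      obtain ⟨k, hk⟩ := k
      simp only at *
      omega⟩
  left_inv := by
    rintro ⟨⟨x, y⟩, ht⟩
    simp only at ht
    by_cases h : 0 ≤ x
    · have h2 : ((m - y) / 2).toNat < m + 1 := by omega
      simp only [h, dite_true, h2]
      apply Subtype.ext
      simp only [Prod.mk.injEq]
      omega
    · have h2 : ¬ m + ((m - y) / 2).toNat < m + 1 := by omega
      simp only [h, dite_false, h2]
      apply Subtype.ext
      simp only [Prod.mk.injEq]
      omega
  right_inv := by
    rintro ⟨k, hk⟩
    by_cases h : k < m + 1
    · have h2 : (0 : ℤ) ≤ (min k (m - k) : ℕ) := by omega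
      simp only [h, dite_true, h2]
      apply Fin.ext
      simp only
      omega
    · have h2 : ¬ (0 : ℤ) ≤ -(min (k - m) (m - (k - m)) : ℕ) := by omega
      simp only [h, dite_false, h2]
      apply Fin.ext
      simp only
      omega

def simDataStep (n : ℕ) : SimData (n + 3) ≃ SimData n ⊕ diamond (n + 3) where
  toFun t := if h : t.1.1 = 0 then Sum.inr ⟨t.1.2, by have := t.2; omega⟩
    else Sum.inl ⟨(t.1.1 - 1, t.1.2), by have := t.2; simp only; omega⟩
  invFun s := match s with
    | Sum.inl t => ⟨(t.1.1 + 1, t.1.2), by have := t.2; simp only; omega⟩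
    | Sum.inr t => ⟨(0, t.1), by have := t.2; simp only; omega⟩
  left_inv := by
    rintro ⟨⟨a, x, y⟩, h⟩
    cases a with
    | zero => simp
    | succ a => simp
  right_inv := by
    rintro (⟨⟨a, x, y⟩, h⟩ | ⟨⟨x, y⟩, h⟩)
    · simp
    · simp

def simDataSmall (n : ℕ) (h : n < 3) : SimData n ≃ diamond n where
  toFun t := ⟨t.1.2, by have := t.2; omega⟩
  invFun t := ⟨(0, t.1), by have := t.2; simp only; omega⟩
  left_inv := by
    rintro ⟨⟨a, x, y⟩, h⟩
    simp only at h
    obtain rfl : a = 0 := by omega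
    rfl
  right_inv := by
    rintro ⟨⟨x, y⟩, h⟩
    rfl

theorem simData_count (n : ℕ) : ∃ N : ℕ, 3 * N = n ^ 2 + 3 * n + 2 + (if 3 ∣ n then 1 else 0) ∧
    Nonempty (SimData n ≃ Fin N) := by
  induction n using Nat.strong_induction_on with
  | _ n ih =>
    match n, ih with
    | 0, _ => exact ⟨1, by norm_num, ⟨simDataZero⟩⟩
    | 1, _ => exact ⟨2, by norm_num, ⟨(simDataSmall 1 (by norm_num)).trans (diamondEquiv 1 (by norm_num))⟩⟩
    | 2, _ => exact ⟨4, by norm_num, ⟨(simDataSmall 2 (by norm_num)).trans (diamondEquiv 2 (by norm_num))⟩⟩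
    | n + 3, ih =>
      obtain ⟨N, hN, ⟨e⟩⟩ := ih n (by omega)
      refine ⟨N + 2 * (n + 3), ?_, ⟨(simDataStep n).trans
        ((Equiv.sumCongr e (diamondEquiv (n + 3) (by omega))).trans finSumFinEquiv)⟩⟩
      have : (3 ∣ n + 3) ↔ 3 ∣ n := by omega
      simp only [this]
      rw [mul_add, hN]
      ring

theorem simData_card (n : ℕ) :
    Nat.card (SimData n) = (n ^ 2 + 3 * n + 2 + if 3 ∣ n then 1 else 0) / 3 := by
  obtain ⟨N, hN, ⟨e⟩⟩ := simData_count n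
  rw [Nat.card_congr e, Nat.card_fin, ← hN]
  omega

open Module in
/-- Orthogonal bases with a divisibility chain exist over `ℤ_[p]`, `p` odd. -/
theorem exists_jordan_basis (p : ℕ) [Fact p.Prime] (h2 : IsUnit (2 : ℤ_[p])) (k : ℕ) :
    ∀ (M : Type) [AddCommGroup M] [Module ℤ_[p] M] [Module.Free ℤ_[p] M]
      [Module.Finite ℤ_[p] M] (_ : finrank ℤ_[p] M = k) (f : QuadraticForm ℤ_[p] M),
      ∃ b : Basis (Fin k) ℤ_[p] M, (∀ i j, i ≠ j → QuadraticMap.polar f (b i) (b j) = 0) ∧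
        ∀ i j, i ≤ j → f (b i) ∣ f (b j) := by
  induction k with
  | zero =>
    intro M _ _ _ _ hk f
    exact ⟨(Module.finBasisOfFinrankEq ℤ_[p] M hk), fun i => i.elim0, fun i => i.elim0⟩
  | succ k ih =>
    intro M _ _ _ _ hk f
    by_cases hf : ∀ x, f x = 0
    · refine ⟨(Module.finBasisOfFinrankEq ℤ_[p] M hk), fun i j _ => ?_, fun i j _ => ?_⟩
      · simp [QuadraticMap.polar, hf]
      · simp [hf]
    push Not at hf
    obtain ⟨x, hx0, hx⟩ : ∃ x, f x ≠ 0 ∧ ∀ y, f x ∣ f y := by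
      obtain ⟨x₀, hx₀⟩ := hf
      let S : Set ℕ := {m | ∃ x, f x ≠ 0 ∧ (f x).valuation = m}
      have hS : S.Nonempty := ⟨_, x₀, hx₀, rfl⟩
      obtain ⟨x, hx, hxv⟩ := Nat.sInf_mem hS
      refine ⟨x, hx, fun y => ?_⟩
      by_cases hy : f y = 0
      · simp [hy]
      have hle : (f x).valuation ≤ (f y).valuation := by
        rw [hxv]; exact Nat.sInf_le ⟨y, hy, rfl⟩
      rw [PadicInt.unitCoeff_spec hx, PadicInt.unitCoeff_spec hy]
      rw [Units.mul_left_dvd, Units.dvd_mul_left]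
      exact pow_dvd_pow _ hle
    have hpol : ∀ y z, f x ∣ QuadraticMap.polar f y z := fun y z =>
      dvd_sub (dvd_sub (hx _) (hx _)) (hx _)
    have hxx : QuadraticMap.polar f x x = 2 * f x := by
      rw [QuadraticMap.polar_self]; simp
    have h2x : ∀ y, 2 * f x ∣ QuadraticMap.polar f x y := fun y => by
      rw [h2.mul_left_dvd]; exact hpol x y
    have h2x0 : 2 * f x ≠ 0 := mul_ne_zero h2.ne_zero hx0
    let N : Submodule ℤ_[p] M := LinearMap.ker (f.polarBilin x)
    have hN : ∀ y, y ∈ N ↔ QuadraticMap.polar f x y = 0 := fun y => by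
      simp [N, LinearMap.mem_ker]
    have hli : ∀ (c : ℤ_[p]), ∀ y ∈ N, c • x + y = 0 → c = 0 := by
      intro c y hy h
      have h1 : QuadraticMap.polar f x (c • x + y) = 0 := by rw [h]; simp
      rw [QuadraticMap.polar_add_right, QuadraticMap.polar_smul_right, (hN y).1 hy, hxx] at h1
      simpa [h2x0, h2.ne_zero, hx0] using h1
    have hsp : ∀ z : M, ∃ c : ℤ_[p], z + c • x ∈ N := by
      intro z
      obtain ⟨c, hc⟩ := h2x z
      refine ⟨-c, (hN _).2 ?_⟩
      rw [QuadraticMap.polar_add_right, QuadraticMap.polar_smul_right, hxx, hc, smul_eq_mul]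
      ring
    have hfr : finrank ℤ_[p] N = k := by
      have b0 := Basis.mkFinCons x (Module.finBasis ℤ_[p] N) hli hsp
      have := Module.finrank_eq_card_basis b0
      rw [hk, Fintype.card_fin] at this
      omega
    obtain ⟨b, hb1, hb2⟩ := ih N hfr (f.comp N.subtype)
    refine ⟨Basis.mkFinCons x b hli hsp, ?_, ?_⟩
    · rw [Basis.coe_mkFinCons]
      intro i j
      refine Fin.cases ?_ (fun i => ?_) i <;> refine Fin.cases ?_ (fun j => ?_) j <;> intro hij
      · exact (hij rfl).elim
      · simpa using (hN _).1 (b j).2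
      · rw [QuadraticMap.polar_comm]
        simpa using (hN _).1 (b i).2
      · have := hb1 i j (fun h => hij (by rw [h]))
        simpa [QuadraticMap.polar] using this
    · rw [Basis.coe_mkFinCons]
      intro i j
      refine Fin.cases ?_ (fun i => ?_) i <;> refine Fin.cases ?_ (fun j => ?_) j <;> intro hij
      · simp
      · simpa using hx _
      · exact absurd hij (by simp)
      · simpa using hb2 i j (by simpa using hij)

theorem equiv_wss (p : ℕ) [Fact p.Prime] (h2 : IsUnit (2 : ℤ_[p]))
    (f : QuadraticForm ℤ_[p] (Fin 3 → ℤ_[p])) :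
    ∃ w : Fin 3 → ℤ_[p], f.Equivalent (QuadraticMap.weightedSumSquares ℤ_[p] w) ∧
      ∀ i j, i ≤ j → w i ∣ w j := by
  obtain ⟨b, hb1, hb2⟩ := exists_jordan_basis p h2 3 (Fin 3 → ℤ_[p]) (by simp) f
  let _ : Invertible (2 : ℤ_[p]) := h2.invertible
  refine ⟨fun i => f (b i), ?_, hb2⟩
  rw [← QuadraticMap.basisRepr_eq_of_iIsOrtho f b]
  · exact ⟨f.isometryEquivBasisRepr b⟩
  · intro i j hij
    have := hb1 i j hij
    simp only [QuadraticMap.polar] at this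
    simp [Function.onFun, QuadraticMap.associated_apply, this]

theorem gram_equiv {R : Type*} [CommRing R] {n : ℕ} {f g : QuadraticForm R (Fin n → R)}
    (h : f.Equivalent g) : ∃ P : Matrix (Fin n) (Fin n) R, IsUnit P.det ∧
      gramMatrix f = P.transpose * gramMatrix g * P := by
  obtain ⟨e⟩ := h
  have hg : ∀ f : QuadraticForm R (Fin n → R),
      gramMatrix f = LinearMap.toMatrix₂' R f.polarBilin := by
    intro f; ext i j; simp [gramMatrix]
  refine ⟨LinearMap.toMatrix' e.toLinearEquiv.toLinearMap, ?_, ?_⟩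
  · rw [LinearMap.det_toMatrix']
    exact LinearEquiv.isUnit_det' _
  · rw [hg, hg, ← LinearMap.toMatrix₂'_compl₁₂]
    congr 1
    refine LinearMap.ext fun x => LinearMap.ext fun y => ?_
    have hm : ∀ z, g (e.toLinearEquiv z) = f z := fun z => e.map_app z
    simp only [LinearMap.compl₁₂_apply, QuadraticMap.polarBilin_apply_apply, QuadraticMap.polar,
      LinearEquiv.coe_coe, ← map_add, hm]

theorem gram_wss {R : Type*} [CommRing R] {n : ℕ} (w : Fin n → R) :
    gramMatrix (QuadraticMap.weightedSumSquares R w) = Matrix.diagonal (fun i => 2 * w i) := by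
  ext i j
  simp only [gramMatrix, Matrix.of_apply, QuadraticMap.polar, QuadraticMap.weightedSumSquares_apply,
    Pi.add_apply, smul_eq_mul, ← Finset.sum_sub_distrib]
  rw [Matrix.diagonal_apply]
  have : ∀ k, w k * (((Pi.single i 1 : Fin n → R) k + (Pi.single j 1 : Fin n → R) k) *
      ((Pi.single i 1 : Fin n → R) k + (Pi.single j 1 : Fin n → R) k)) -
      w k * ((Pi.single i 1 : Fin n → R) k * (Pi.single i 1 : Fin n → R) k) -
      w k * ((Pi.single j 1 : Fin n → R) k * (Pi.single j 1 : Fin n → R) k) =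
      2 * w k * (Pi.single j 1 : Fin n → R) k * (Pi.single i 1 : Fin n → R) k := fun k => by ring
  simp only [this]
  by_cases h : i = j
  · subst h
    simp [Pi.single_apply]
  · simp [Pi.single_apply, h, Ne.symm h, eq_comm]

theorem wss_smul {R : Type*} [CommRing R] {n : ℕ} (w : Fin n → R) (u : R) :
    u • QuadraticMap.weightedSumSquares R w = QuadraticMap.weightedSumSquares R (fun i => u * w i) := by
  ext x
  simp [Finset.mul_sum, mul_assoc]

theorem equiv_smul {R : Type*} [CommRing R] {n : ℕ} {f g : QuadraticForm R (Fin n → R)}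
    (h : f.Equivalent g) (u : R) : (u • f).Equivalent (u • g) := by
  obtain ⟨e⟩ := h
  have h : ∀ x, (u • g) (e.toLinearEquiv x) = (u • f) x := by
    intro x
    have := e.map_app x
    change u • g (e x) = u • f x
    rw [this]
  exact ⟨{ e.toLinearEquiv with map_app' := h }⟩

theorem similarForm_equivalence {R : Type*} [CommRing R] {n : ℕ} :
    Equivalence (SimilarForm (R := R) (n := n)) where
  refl f := ⟨1, by simpa using QuadraticMap.Equivalent.refl f⟩
  symm := by
    rintro f g ⟨u, h⟩
    refine ⟨u⁻¹, ?_⟩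
    have := equiv_smul h.symm (↑u⁻¹ : R)
    rwa [smul_smul, Units.inv_mul, one_smul] at this
  trans := by
    rintro f g h ⟨u, hu⟩ ⟨v, hv⟩
    refine ⟨v * u, ?_⟩
    have := equiv_smul hu (v : R)
    rw [smul_smul] at this
    exact this.trans hv

theorem similar_of_equiv {R : Type*} [CommRing R] {n : ℕ} {f g : QuadraticForm R (Fin n → R)}
    (h : f.Equivalent g) : SimilarForm f g := ⟨1, by simpa using h⟩

/-- diagonal ternary form -/
noncomputable def dform {R : Type*} [CommRing R] (a b c : R) : QuadraticForm R (Fin 3 → R) :=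
  QuadraticMap.weightedSumSquares R ![a, b, c]

theorem dform_apply {R : Type*} [CommRing R] (a b c : R) (x : Fin 3 → R) :
    dform a b c x = a * (x 0 * x 0) + b * (x 1 * x 1) + c * (x 2 * x 2) := by
  simp [dform, Fin.sum_univ_three]

theorem dform_smul {R : Type*} [CommRing R] (a b c u : R) :
    u • dform a b c = dform (u * a) (u * b) (u * c) := by
  ext x
  simp only [smul_apply, dform_apply, smul_eq_mul]
  ring

theorem dform_similar_smul {R : Type*} [CommRing R] (a b c : R) {u : R} (hu : IsUnit u) :
    SimilarForm (dform a b c) (dform (u * a) (u * b) (u * c)) := by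
  obtain ⟨u, rfl⟩ := hu
  refine ⟨u, ?_⟩
  rw [dform_smul]

theorem dform_equiv_sq {R : Type*} [CommRing R] (a b c : R) {u v w : R} (hu : IsUnit u)
    (hv : IsUnit v) (hw : IsUnit w) :
    (dform (a * u ^ 2) (b * v ^ 2) (c * w ^ 2)).Equivalent (dform a b c) := by
  obtain ⟨u, rfl⟩ := hu
  obtain ⟨v, rfl⟩ := hv
  obtain ⟨w, rfl⟩ := hw
  refine ⟨QuadraticForm.isometryEquivWeightedSumSquaresWeightedSumSquares ![u, v, w] ?_⟩
  intro i
  fin_cases i <;> simp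

theorem dform_of_matrix {R : Type*} [CommRing R] {f g : QuadraticForm R (Fin 3 → R)}
    (P : Matrix (Fin 3) (Fin 3) R) (hP : IsUnit P.det) (h : ∀ x, g (P.mulVec x) = f x) :
    f.Equivalent g := by
  have hP' : IsUnit P := (Matrix.isUnit_iff_isUnit_det P).2 hP
  have h' : ∀ x, g (Matrix.toLin'OfInv (Matrix.nonsing_inv_mul P hP)
      (Matrix.mul_nonsing_inv P hP) x) = f x := by
    intro x
    rw [← h x]
    rfl
  exact ⟨{ Matrix.toLin'OfInv (Matrix.nonsing_inv_mul P hP) (Matrix.mul_nonsing_inv P hP) with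
    map_app' := h' }⟩

theorem dform_swap23 {R : Type*} [CommRing R] (a b c : R) :
    (dform a b c).Equivalent (dform a c b) := by
  refine dform_of_matrix !![1, 0, 0; 0, 0, 1; 0, 1, 0] (by simp [Matrix.det_fin_three]) ?_
  intro x
  simp [dform_apply, dotProduct, Fin.sum_univ_three]
  ring

theorem dform_swap13 {R : Type*} [CommRing R] (a b c : R) :
    (dform a b c).Equivalent (dform c b a) := by
  refine dform_of_matrix !![0, 0, 1; 0, 1, 0; 1, 0, 0] (by simp [Matrix.det_fin_three]) ?_
  intro x
  simp [dform_apply, dotProduct, Fin.sum_univ_three]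
  ring

theorem dform_rot {R : Type*} [CommRing R] (z x α β : R) (h : IsUnit (α ^ 2 + β ^ 2)) :
    (dform z ((α ^ 2 + β ^ 2) * x) ((α ^ 2 + β ^ 2) * x)).Equivalent (dform z x x) := by
  refine dform_of_matrix !![1, 0, 0; 0, α, -β; 0, β, α] ?_ ?_
  · rw [Matrix.det_fin_three]
    simpa [pow_two] using h
  · intro x
    simp [dform_apply, dotProduct, Fin.sum_univ_three]
    ring

theorem dform_invariants {R : Type*} [CommRing R] [IsDomain R] (h2 : (2 : R) ≠ 0)
    {a b c a' b' c' : R} (h : (dform a b c).Equivalent (dform a' b' c')) :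
    (∃ q₀ q₁ q₂, a = a' * q₀ ^ 2 + b' * q₁ ^ 2 + c' * q₂ ^ 2) ∧
    (∃ q₀ q₁ q₂, a * b = a' * b' * q₀ ^ 2 + a' * c' * q₁ ^ 2 + b' * c' * q₂ ^ 2) ∧
    (∃ d, IsUnit d ∧ a * b * c = a' * b' * c' * d ^ 2) := by
  obtain ⟨P, hP, h⟩ := gram_equiv h
  rw [dform, dform, gram_wss, gram_wss] at h
  have e : ∀ i j, (if i = j then ![a, b, c] i else 0) =
      a' * P 0 i * P 0 j + b' * P 1 i * P 1 j + c' * P 2 i * P 2 j := by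
    intro i j
    have hij := congrFun (congrFun h i) j
    rw [Matrix.diagonal_apply, Matrix.mul_apply, Fin.sum_univ_three] at hij
    simp only [Matrix.mul_diagonal, Matrix.transpose_apply] at hij
    simp only [Matrix.cons_val_zero, Matrix.cons_val_one, Matrix.cons_val] at hij
    apply mul_left_cancel₀ h2
    rw [mul_ite, mul_zero, hij]
    ring
  have e00 := e 0 0
  have e01 := e 0 1
  have e11 := e 1 1
  simp at e00 e01 e11
  refine ⟨⟨P 0 0, P 1 0, P 2 0, ?_⟩, ⟨P 0 0 * P 1 1 - P 1 0 * P 0 1, P 0 0 * P 2 1 - P 2 0 * P 0 1,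
    P 1 0 * P 2 1 - P 2 0 * P 1 1, ?_⟩, ⟨P.det, hP, ?_⟩⟩
  · rw [e00]; ring
  · rw [e00, e11]
    have : (a' * P 0 0 * P 0 1 + b' * P 1 0 * P 1 1 + c' * P 2 0 * P 2 1) ^ 2 = 0 := by
      rw [← e01]; simp
    linear_combination this
  · have hd := congrArg Matrix.det h
    rw [Matrix.det_mul, Matrix.det_mul, Matrix.det_transpose, Matrix.det_diagonal,
      Matrix.det_diagonal, Fin.prod_univ_three, Fin.prod_univ_three] at hd
    simp only [Matrix.cons_val_zero, Matrix.cons_val_one, Matrix.cons_val] at hd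
    apply mul_left_cancel₀ (pow_ne_zero 3 h2)
    linear_combination hd

section padic

variable {p : ℕ} [Fact p.Prime]

theorem two_isUnit (hp : p ≠ 2) : IsUnit (2 : ℤ_[p]) := by
  by_contra h
  rw [PadicInt.not_isUnit_iff] at h
  have h' : ‖((2 : ℤ) : ℤ_[p])‖ < 1 := by exact_mod_cast h
  rw [PadicInt.norm_int_lt_one_iff_dvd] at h'
  have : p ∣ 2 := by exact_mod_cast h'
  exact hp ((Nat.prime_dvd_prime_iff_eq Fact.out Nat.prime_two).1 this)

/-- The quadratic residue character. -/
noncomputable def chi (x : ℤ_[p]) : ℤ := quadraticChar (ZMod p) (PadicInt.toZMod x)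

theorem chi_mul (x y : ℤ_[p]) : chi (x * y) = chi x * chi y := by
  rw [chi, map_mul, map_mul, chi, chi]

theorem toZMod_eq_zero_iff (x : ℤ_[p]) : PadicInt.toZMod x = 0 ↔ ¬ IsUnit x := by
  rw [← RingHom.mem_ker, PadicInt.ker_toZMod, IsLocalRing.mem_maximalIdeal, mem_nonunits_iff]

theorem chi_ne_zero_iff (x : ℤ_[p]) : chi x ≠ 0 ↔ IsUnit x := by
  rw [chi, Ne, quadraticChar_eq_zero_iff, toZMod_eq_zero_iff, not_not]

theorem chi_sq {x : ℤ_[p]} (hx : IsUnit x) : chi x * chi x = 1 := by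
  rw [← pow_two]
  apply quadraticChar_sq_one
  rw [Ne, toZMod_eq_zero_iff, not_not]
  exact hx

theorem chi_one : chi (1 : ℤ_[p]) = 1 := by simp [chi]

theorem chi_pm {x : ℤ_[p]} (hx : IsUnit x) : chi x = 1 ∨ chi x = -1 := by
  apply quadraticChar_dichotomy
  rw [Ne, toZMod_eq_zero_iff, not_not]
  exact hx

theorem chi_add (x y : ℤ_[p]) : chi (x + (p : ℤ_[p]) * y) = chi x := by
  simp [chi]

open Polynomial in
theorem sq_of_chi (hp : p ≠ 2) {u : ℤ_[p]} (h : chi u = 1) :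
    ∃ v, IsUnit v ∧ u = v ^ 2 := by
  have hu : IsUnit u := (chi_ne_zero_iff u).1 (by rw [h]; norm_num)
  have hu0 : PadicInt.toZMod u ≠ 0 := by rw [Ne, toZMod_eq_zero_iff, not_not]; exact hu
  obtain ⟨r, hr⟩ := (quadraticChar_one_iff_isSquare hu0).1 h
  obtain ⟨a, rfl⟩ := ZMod.ringHom_surjective (PadicInt.toZMod (p := p)) r
  have ha : IsUnit a := by
    by_contra hc
    rw [← toZMod_eq_zero_iff] at hc
    rw [hc, mul_zero] at hr
    exact hu0 hr
  have h2a : ‖2 * a‖ = 1 := PadicInt.isUnit_iff.1 ((two_isUnit hp).mul ha)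
  have hd : ‖a ^ 2 - u‖ < 1 := by
    rw [← PadicInt.not_isUnit_iff, ← toZMod_eq_zero_iff, map_sub, hr, map_pow]
    ring
  have key := hensels_lemma (p := p) (R := ℤ_[p]) (F := X ^ 2 - C u) (a := a) (by
    simp only [map_sub, aeval_X, map_pow, aeval_C, derivative_X_pow, derivative_C,
      map_mul, sub_zero]
    simp only [Algebra.algebraMap_self, RingHom.id_apply]
    norm_num
    norm_num at h2a
    rw [h2a]
    simpa using hd)
  obtain ⟨z, hz, -⟩ := key
  have hz' : u = z ^ 2 := by
    simp at hz
    exact (sub_eq_zero.1 hz).symm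
  refine ⟨z, ?_, hz'⟩
  rw [hz'] at hu
  exact (isUnit_pow_iff two_ne_zero).1 hu

theorem exists_nonsq (hp : p ≠ 2) : ∃ α β : ℤ_[p], chi (α ^ 2 + β ^ 2) = -1 := by
  obtain ⟨r, hr⟩ := quadraticChar_exists_neg_one (F := ZMod p) (by rwa [ZMod.ringChar_zmod_n])
  obtain ⟨a, b, hab⟩ := ZMod.sq_add_sq p r
  obtain ⟨α, rfl⟩ := ZMod.ringHom_surjective (PadicInt.toZMod (p := p)) a
  obtain ⟨β, rfl⟩ := ZMod.ringHom_surjective (PadicInt.toZMod (p := p)) b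
  refine ⟨α, β, ?_⟩
  rw [chi, map_add, map_pow, map_pow, hab, hr]

theorem unit_decomp (hp : p ≠ 2) {ε u : ℤ_[p]} (hε : chi ε = -1) (hu : IsUnit u) :
    ∃ s : Bool, ∃ v, IsUnit v ∧ u = (if s then ε else 1) * v ^ 2 := by
  rcases chi_pm hu with h | h
  · obtain ⟨v, hv, rfl⟩ := sq_of_chi hp h
    exact ⟨false, v, hv, by simp⟩
  · have hεu : IsUnit ε := (chi_ne_zero_iff ε).1 (by rw [hε]; norm_num)
    obtain ⟨v, hv, hvu⟩ := sq_of_chi hp (u := ε * u) (by rw [chi_mul, h, hε]; norm_num)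
    obtain ⟨e, rfl⟩ := hεu
    refine ⟨true, (↑e⁻¹ : ℤ_[p]) * v, (Units.isUnit _).mul hv, ?_⟩
    rw [if_pos rfl, mul_pow, ← hvu]
    have : (e : ℤ_[p]) * (↑e⁻¹ : ℤ_[p]) = 1 := Units.mul_inv e
    linear_combination (-u) * ((e : ℤ_[p]) * (↑e⁻¹ : ℤ_[p]) + 1) * this

theorem p_ne : (p : ℤ_[p]) ≠ 0 := by
  exact_mod_cast (Fact.out : p.Prime).ne_zero

theorem pow_dvd_unit_mul {u : ℤ_[p]} (hu : IsUnit u) {m k : ℕ}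
    (h : (p : ℤ_[p]) ^ m ∣ u * (p : ℤ_[p]) ^ k) : m ≤ k := by
  rw [hu.dvd_mul_left] at h
  exact (pow_dvd_pow_iff p_ne PadicInt.p_nonunit).1 h

theorem chi_lead {u v₀ v₁ v₂ q₀ q₁ q₂ : ℤ_[p]} {m k l : ℕ} (hu : IsUnit u) (hk : m < k)
    (hl : m < l)
    (h : u * (p : ℤ_[p]) ^ m = v₀ * (p : ℤ_[p]) ^ m * q₀ ^ 2 + v₁ * (p : ℤ_[p]) ^ k * q₁ ^ 2 +
      v₂ * (p : ℤ_[p]) ^ l * q₂ ^ 2) : chi u = chi v₀ := by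
  obtain ⟨i, rfl⟩ := Nat.exists_eq_add_of_lt hk
  obtain ⟨j, rfl⟩ := Nat.exists_eq_add_of_lt hl
  have h' : u = v₀ * q₀ ^ 2 + p * (v₁ * p ^ i * q₁ ^ 2 + v₂ * p ^ j * q₂ ^ 2) := by
    apply mul_right_cancel₀ (pow_ne_zero m (p_ne (p := p)))
    rw [h]; ring
  have h3 : chi u = chi v₀ * (chi q₀ * chi q₀) := by
    rw [← chi_mul, ← chi_mul, h', chi_add, pow_two]
  have hq : IsUnit q₀ := by
    rw [← chi_ne_zero_iff]
    intro hq
    rw [hq] at h3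
    exact (chi_ne_zero_iff u).2 hu (by rw [h3]; ring)
  rw [h3, chi_sq hq, mul_one]

/-- sign representative -/
noncomputable def sg (ε : ℤ_[p]) (s : Bool) : ℤ_[p] := if s then ε else 1

/-- Representatives, unconstrained. -/
noncomputable def rep0 (ε : ℤ_[p]) (a b c : ℕ) (s t : Bool) :
    QuadraticForm ℤ_[p] (Fin 3 → ℤ_[p]) :=
  dform (sg ε s * (p : ℤ_[p]) ^ a) ((p : ℤ_[p]) ^ b) (sg ε t * (p : ℤ_[p]) ^ c)

theorem isUnit_of_chi {ε : ℤ_[p]} (hε : chi ε = -1) : IsUnit ε :=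
  (chi_ne_zero_iff ε).1 (by rw [hε]; norm_num)

theorem sg_isUnit {ε : ℤ_[p]} (hε : chi ε = -1) (s : Bool) : IsUnit (sg ε s) := by
  cases s
  · simp [sg]
  · simpa [sg] using isUnit_of_chi hε

theorem chi_sg {ε : ℤ_[p]} (hε : chi ε = -1) {s t : Bool} (h : chi (sg ε s) = chi (sg ε t)) :
    s = t := by
  cases s <;> cases t <;> simp [sg, hε, chi_one] at h ⊢

theorem similar_swap {R : Type*} [CommRing R] {n : ℕ} {f g : QuadraticForm R (Fin n → R)}
    (h : SimilarForm f g) : SimilarForm g f := similarForm_equivalence.symm h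

theorem similar_trans {R : Type*} [CommRing R] {n : ℕ} {f g k : QuadraticForm R (Fin n → R)}
    (hfg : SimilarForm f g) (hgk : SimilarForm g k) : SimilarForm f k :=
  similarForm_equivalence.trans hfg hgk

/-- normalization when the last two exponents agree -/
theorem rep0_bb {α β : ℤ_[p]} (hε : chi (α ^ 2 + β ^ 2) = -1) (a b : ℕ) (t : Bool) :
    SimilarForm (rep0 (α ^ 2 + β ^ 2) a b b true t) (rep0 (α ^ 2 + β ^ 2) a b b false t) := by
  have hu := isUnit_of_chi hε
  refine similar_trans (dform_similar_smul _ _ _ hu) ?_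
  set q : ℤ_[p] := (p : ℤ_[p]) ^ b
  set r : ℤ_[p] := (p : ℤ_[p]) ^ a
  cases t
  · have h1 := dform_rot ((α ^ 2 + β ^ 2) * ((α ^ 2 + β ^ 2) * r)) q α β hu
    have h2 := dform_equiv_sq r q q hu isUnit_one isUnit_one
    have h3 := similar_of_equiv (h1.trans (by convert h2 using 2 <;> ring))
    simp only [rep0, sg]
    convert h3 using 2 <;> simp [q, r]
  · have h1 := dform_swap23 ((α ^ 2 + β ^ 2) * ((α ^ 2 + β ^ 2) * r)) ((α ^ 2 + β ^ 2) * q)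
      ((α ^ 2 + β ^ 2) * ((α ^ 2 + β ^ 2) * q))
    have h2 := dform_equiv_sq r q ((α ^ 2 + β ^ 2) * q) hu hu isUnit_one
    have h3 := similar_of_equiv (h1.trans (by convert h2 using 2 <;> ring))
    simp only [rep0, sg]
    convert h3 using 2 <;> simp [q, r]

theorem rep0_swap (ε : ℤ_[p]) (a b c : ℕ) (s t : Bool) :
    SimilarForm (rep0 ε a b c s t) (rep0 ε c b a t s) :=
  similar_of_equiv (dform_swap13 _ _ _)

theorem rep0_aa {α β : ℤ_[p]} (hε : chi (α ^ 2 + β ^ 2) = -1) (a c : ℕ) (s : Bool) :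
    SimilarForm (rep0 (α ^ 2 + β ^ 2) a a c s true) (rep0 (α ^ 2 + β ^ 2) a a c s false) :=
  similar_trans (rep0_swap _ _ _ _ _ _) (similar_trans (rep0_bb hε c a s) (rep0_swap _ _ _ _ _ _))

/-- Representatives. -/
noncomputable def rep (ε : ℤ_[p]) (t : ℕ × ℤ × ℤ) : QuadraticForm ℤ_[p] (Fin 3 → ℤ_[p]) :=
  rep0 ε t.1 (t.1 + t.2.1.natAbs) (t.1 + t.2.1.natAbs + t.2.2.natAbs)
    (decide (t.2.2 < 0)) (decide (t.2.1 < 0))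

theorem rep0_to_rep {α β : ℤ_[p]} (hε : chi (α ^ 2 + β ^ 2) = -1) (a x y : ℕ) (s t : Bool) :
    ∃ d : SimData (3 * a + 2 * x + y),
      SimilarForm (rep0 (α ^ 2 + β ^ 2) a (a + x) (a + x + y) s t) (rep (α ^ 2 + β ^ 2) d.1) := by
  -- it suffices to treat sign-normalized data
  suffices h : ∀ s t : Bool, (y = 0 → s = false) → (x = 0 → t = false) →
      ∃ d : SimData (3 * a + 2 * x + y),
      SimilarForm (rep0 (α ^ 2 + β ^ 2) a (a + x) (a + x + y) s t) (rep (α ^ 2 + β ^ 2) d.1) by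
    have hs : ∃ s', (y = 0 → s' = false) ∧
        SimilarForm (rep0 (α ^ 2 + β ^ 2) a (a + x) (a + x + y) s t)
          (rep0 (α ^ 2 + β ^ 2) a (a + x) (a + x + y) s' t) := by
      by_cases hy : y = 0
      · subst hy
        refine ⟨false, fun _ => rfl, ?_⟩
        cases s
        · exact similarForm_equivalence.refl _
        · exact rep0_bb hε _ _ _
      · exact ⟨s, fun h => absurd h hy, similarForm_equivalence.refl _⟩
    obtain ⟨s', hs', hsim⟩ := hs
    have ht : ∃ t', (x = 0 → t' = false) ∧
        SimilarForm (rep0 (α ^ 2 + β ^ 2) a (a + x) (a + x + y) s' t)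
          (rep0 (α ^ 2 + β ^ 2) a (a + x) (a + x + y) s' t') := by
      by_cases hx : x = 0
      · subst hx
        refine ⟨false, fun _ => rfl, ?_⟩
        cases t
        · exact similarForm_equivalence.refl _
        · exact rep0_aa hε _ _ _
      · exact ⟨t, fun h => absurd h hx, similarForm_equivalence.refl _⟩
    obtain ⟨t', ht', htim⟩ := ht
    obtain ⟨d, hd⟩ := h s' t' hs' ht'
    exact ⟨d, similar_trans hsim (similar_trans htim hd)⟩
  intro s t hs ht
  have key : ∀ (s : Bool) (y : ℕ), (y = 0 → s = false) →
      ∃ z : ℤ, z.natAbs = y ∧ decide (z < 0) = s := by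
    intro s y hs
    cases s
    · exact ⟨y, by simp, by simp⟩
    · refine ⟨-y, by simp, ?_⟩
      have : y ≠ 0 := fun h => by simpa using hs h
      simp; omega
  obtain ⟨z, hz1, hz2⟩ := key s y hs
  obtain ⟨w, hw1, hw2⟩ := key t x ht
  refine ⟨⟨(a, w, z), by simp [hz1, hw1]⟩, ?_⟩
  simp only [rep, hz1, hw1, hz2, hw2]
  exact similarForm_equivalence.refl _

theorem rep_surj (hp : p ≠ 2) {α β : ℤ_[p]} (hε : chi (α ^ 2 + β ^ 2) = -1) (n : ℕ)
    (f : QuadraticForm ℤ_[p] (Fin 3 → ℤ_[p])) (h0 : (gramMatrix f).det ≠ 0)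
    (h1 : Ideal.span {(gramMatrix f).det} = Ideal.span {(p : ℤ_[p]) ^ n}) :
    ∃ d : SimData n, SimilarForm f (rep (α ^ 2 + β ^ 2) d.1) := by
  obtain ⟨w, hw, hdvd⟩ := equiv_wss p (two_isUnit hp) f
  obtain ⟨P, hP, hPf⟩ := gram_equiv hw
  have hdet : (gramMatrix f).det = (P.det ^ 2 * 2 ^ 3) * (w 0 * w 1 * w 2) := by
    rw [hPf, gram_wss, Matrix.det_mul, Matrix.det_mul, Matrix.det_transpose, Matrix.det_diagonal,
      Fin.prod_univ_three]
    ring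
  have hU : IsUnit (P.det ^ 2 * 2 ^ 3) := (hP.pow 2).mul ((two_isUnit hp).pow 3)
  have hw0 : w 0 ≠ 0 := fun h => h0 (by rw [hdet, h]; ring)
  have hw1 : w 1 ≠ 0 := fun h => h0 (by rw [hdet, h]; ring)
  have hw2 : w 2 ≠ 0 := fun h => h0 (by rw [hdet, h]; ring)
  have d01 := hdvd 0 1 (by decide)
  have d12 := hdvd 1 2 (by decide)
  have hwd : w = ![w 0, w 1, w 2] := by ext i; fin_cases i <;> rfl
  have hsim : SimilarForm f (dform (w 0) (w 1) (w 2)) := by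
    refine similar_of_equiv ?_
    rw [dform, ← hwd]
    exact hw
  obtain ⟨a, u, hu, ha⟩ : ∃ (a : ℕ) (u : ℤ_[p]), IsUnit u ∧ w 0 = u * (p : ℤ_[p]) ^ a :=
    ⟨_, _, Units.isUnit _, PadicInt.unitCoeff_spec hw0⟩
  obtain ⟨b, v, hv, hb⟩ : ∃ (a : ℕ) (u : ℤ_[p]), IsUnit u ∧ w 1 = u * (p : ℤ_[p]) ^ a :=
    ⟨_, _, Units.isUnit _, PadicInt.unitCoeff_spec hw1⟩
  obtain ⟨c, t, ht, hc⟩ : ∃ (a : ℕ) (u : ℤ_[p]), IsUnit u ∧ w 2 = u * (p : ℤ_[p]) ^ a :=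
    ⟨_, _, Units.isUnit _, PadicInt.unitCoeff_spec hw2⟩
  rw [ha, hb] at d01
  rw [hb, hc] at d12
  have hab : a ≤ b := pow_dvd_unit_mul hv ((dvd_mul_left _ _).trans d01)
  have hbc : b ≤ c := pow_dvd_unit_mul ht ((dvd_mul_left _ _).trans d12)
  have hdet' : (gramMatrix f).det = (P.det ^ 2 * 2 ^ 3 * (u * v * t)) * (p : ℤ_[p]) ^ (a + b + c) := by
    rw [hdet, ha, hb, hc]; ring
  have hU' : IsUnit (P.det ^ 2 * 2 ^ 3 * (u * v * t)) := hU.mul ((hu.mul hv).mul ht)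
  have hsum : a + b + c = n := by
    apply le_antisymm
    · have : (gramMatrix f).det ∣ (p : ℤ_[p]) ^ n := by
        rw [← Ideal.mem_span_singleton, h1]; exact Ideal.mem_span_singleton_self _
      refine pow_dvd_unit_mul (p := p) isUnit_one ?_
      rw [one_mul]
      refine dvd_trans ?_ this
      rw [hdet']; exact dvd_mul_left _ _
    · have : (p : ℤ_[p]) ^ n ∣ (gramMatrix f).det := by
        rw [← Ideal.mem_span_singleton, ← h1]; exact Ideal.mem_span_singleton_self _
      rw [hdet'] at this
      exact pow_dvd_unit_mul hU' this
  obtain ⟨x, rfl⟩ := Nat.exists_eq_add_of_le hab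
  obtain ⟨y, rfl⟩ := Nat.exists_eq_add_of_le hbc
  obtain rfl : n = 3 * a + 2 * x + y := by omega
  obtain ⟨s, e, he, hse⟩ := unit_decomp hp hε (hv.mul hu)
  obtain ⟨s', e', he', hse'⟩ := unit_decomp hp hε (hv.mul ht)
  obtain ⟨d, hd⟩ := rep0_to_rep hε a x y s s'
  refine ⟨d, similar_trans hsim (similar_trans (dform_similar_smul _ _ _ hv) (similar_trans ?_ hd))⟩
  have := dform_equiv_sq (sg (α ^ 2 + β ^ 2) s * (p : ℤ_[p]) ^ a) ((p : ℤ_[p]) ^ (a + x))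
    (sg (α ^ 2 + β ^ 2) s' * (p : ℤ_[p]) ^ (a + x + y)) he hv he'
  refine similar_of_equiv ?_
  rw [rep0]
  convert this using 2
  · rw [ha, ← mul_assoc, hse, sg]; ring
  · rw [hb]; ring
  · rw [hc, ← mul_assoc, hse', sg]; ring

theorem rep0_exp_le (hp : p ≠ 2) {ε : ℤ_[p]} (hε : chi ε = -1) {a b c a' b' c' : ℕ}
    {s t s' t' : Bool} (hab' : a' ≤ b') (hbc' : b' ≤ c')
    (h : SimilarForm (rep0 ε a b c s t) (rep0 ε a' b' c' s' t')) : a' ≤ a ∧ a' + b' ≤ a + b := by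
  obtain ⟨l, h⟩ := h
  rw [rep0, dform_smul] at h
  obtain ⟨⟨q₀, q₁, q₂, hq⟩, ⟨r₀, r₁, r₂, hr⟩, -⟩ := dform_invariants (two_isUnit hp).ne_zero h
  constructor
  · refine pow_dvd_unit_mul (l.isUnit.mul (sg_isUnit hε s)) ?_
    rw [mul_assoc, hq]
    refine dvd_add (dvd_add ?_ ?_) ?_ <;> refine Dvd.dvd.mul_right ?_ _
    · exact dvd_mul_left _ _
    · exact pow_dvd_pow _ hab'
    · exact Dvd.dvd.mul_left (pow_dvd_pow _ (hab'.trans hbc')) _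
  · refine pow_dvd_unit_mul ((l.isUnit.mul (sg_isUnit hε s)).mul l.isUnit) ?_
    have e : (l : ℤ_[p]) * sg ε s * l * (p : ℤ_[p]) ^ (a + b) =
      l * (sg ε s * (p : ℤ_[p]) ^ a) * (l * (p : ℤ_[p]) ^ b) := by ring
    rw [e, hr, pow_add]
    refine dvd_add (dvd_add ?_ ?_) ?_ <;> refine Dvd.dvd.mul_right ?_ _
    · exact mul_dvd_mul (dvd_mul_left _ _) dvd_rfl
    · exact mul_dvd_mul (dvd_mul_left _ _) (Dvd.dvd.mul_left (pow_dvd_pow _ hbc') _)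
    · exact mul_dvd_mul (pow_dvd_pow _ hab')
        (Dvd.dvd.mul_left (pow_dvd_pow _ hbc') _)

theorem rep0_sign (hp : p ≠ 2) {ε : ℤ_[p]} (hε : chi ε = -1) {a b c : ℕ}
    {s t s' t' : Bool} (hab : a ≤ b) (hbc : b ≤ c)
    (h : SimilarForm (rep0 ε a b c s t) (rep0 ε a b c s' t')) :
    (b < c → s = s') ∧ (a < b → t = t') := by
  obtain ⟨l, h⟩ := h
  rw [rep0, dform_smul] at h
  obtain ⟨⟨q₀, q₁, q₂, hq⟩, ⟨r₀, r₁, r₂, hr⟩, d, hdu, hd⟩ :=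
    dform_invariants (two_isUnit hp).ne_zero h
  have hl : chi (l : ℤ_[p]) * chi (l : ℤ_[p]) = 1 := chi_sq l.isUnit
  constructor
  · intro hlt
    apply chi_sg hε
    have := chi_lead (u := (l : ℤ_[p]) * (l : ℤ_[p]) * sg ε s) (v₀ := sg ε s') (v₁ := sg ε s' * sg ε t')
      (v₂ := sg ε t') (q₀ := r₀) (q₁ := r₁) (q₂ := r₂) (m := a + b) (k := a + c) (l := b + c)
      ((l.isUnit.mul l.isUnit).mul (sg_isUnit hε s)) (by omega) (by omega)
      (by linear_combination hr)
    rw [← this, chi_mul, chi_mul, hl, one_mul]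
  · intro hlt
    apply chi_sg hε
    have h1 := chi_lead (u := (l : ℤ_[p]) * sg ε s) (v₀ := sg ε s') (v₁ := 1)
      (v₂ := sg ε t') (q₀ := q₀) (q₁ := q₁) (q₂ := q₂) (m := a) (k := b) (l := c)
      (l.isUnit.mul (sg_isUnit hε s)) (by omega) (by omega)
      (by linear_combination hq)
    have h2 : (l : ℤ_[p]) * l * (l * sg ε s) * sg ε t = sg ε s' * sg ε t' * (d * d) := by
      apply mul_right_cancel₀ (pow_ne_zero (a + b + c) (p_ne (p := p)))
      linear_combination hd
    have h3 := congrArg chi h2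
    rw [chi_mul, chi_mul, chi_mul (l : ℤ_[p]) l, h1, hl, one_mul, chi_mul, chi_mul, chi_mul d d,
      chi_sq hdu, mul_one] at h3
    exact mul_left_cancel₀ ((chi_ne_zero_iff _).2 (sg_isUnit hε s')) h3

theorem rep_inj (hp : p ≠ 2) {ε : ℤ_[p]} (hε : chi ε = -1) (n : ℕ) (d d' : SimData n)
    (h : SimilarForm (rep ε d.1) (rep ε d'.1)) : d = d' := by
  obtain ⟨⟨a, x, y⟩, hd⟩ := d
  obtain ⟨⟨a', x', y'⟩, hd'⟩ := d'
  simp only [rep] at h hd hd'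
  have h1 := rep0_exp_le hp hε (by omega) (by omega) h
  have h2 := rep0_exp_le hp hε (by omega) (by omega) (similar_swap h)
  obtain rfl : a = a' := by omega
  have hx : x.natAbs = x'.natAbs := by omega
  have hy : y.natAbs = y'.natAbs := by omega
  rw [← hx, ← hy] at h
  obtain ⟨h3, h4⟩ := rep0_sign hp hε (by omega) (by omega) h
  have hyy : y = y' := by
    by_cases h0 : y.natAbs = 0
    · omega
    · have := h3 (by omega)
      rw [decide_eq_decide] at this
      omega
  have hxx : x = x' := by
    by_cases h0 : x.natAbs = 0
    · omega
    · have := h4 (by omega)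
      rw [decide_eq_decide] at this
      omega
  subst hxx hyy
  rfl

theorem rep_mem (hp : p ≠ 2) {ε : ℤ_[p]} (hε : chi ε = -1) (n : ℕ) (d : SimData n) :
    (gramMatrix (rep ε d.1)).det ≠ 0 ∧
      Ideal.span {(gramMatrix (rep ε d.1)).det} = Ideal.span {(p : ℤ_[p]) ^ n} := by
  obtain ⟨⟨a, x, y⟩, hd⟩ := d
  simp only at hd
  have hU : IsUnit (2 ^ 3 * sg ε (decide (y < 0)) * sg ε (decide (x < 0))) :=
    (((two_isUnit hp).pow 3).mul (sg_isUnit hε _)).mul (sg_isUnit hε _)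
  have e : (gramMatrix (rep ε (a, x, y))).det =
      (p : ℤ_[p]) ^ n * (2 ^ 3 * sg ε (decide (y < 0)) * sg ε (decide (x < 0))) := by
    rw [rep, rep0, dform, gram_wss, Matrix.det_diagonal, Fin.prod_univ_three, ← hd]
    simp only [Matrix.cons_val_zero, Matrix.cons_val_one, Matrix.cons_val]
    ring
  simp only [e]
  exact ⟨mul_ne_zero (pow_ne_zero _ p_ne) hU.ne_zero, Ideal.span_singleton_mul_right_unit hU _⟩

end padic

theorem stmt_16 (p : ℕ) [Fact p.Prime] (hp : p ≠ 2) (n : ℕ) :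
    Nat.card (Quot (fun (f g : {f : QuadraticForm ℤ_[p] (Fin 3 → ℤ_[p]) //
        (gramMatrix f).det ≠ 0 ∧
          Ideal.span {(gramMatrix f).det} = Ideal.span {(p : ℤ_[p]) ^ n}}) =>
      SimilarForm f.1 g.1)) = (n ^ 2 + 3 * n + 2 + if 3 ∣ n then 1 else 0) / 3 := by
  obtain ⟨α, β, hε⟩ := exists_nonsq (p := p) hp
  rw [← simData_card n]
  symm
  refine Nat.card_congr (Equiv.ofBijective
    (fun d : SimData n => Quot.mk _ ⟨rep (α ^ 2 + β ^ 2) d.1, rep_mem hp hε n d⟩) ⟨?_, ?_⟩)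
  · intro d d' hdd
    have hE : Equivalence (fun (f g : {f : QuadraticForm ℤ_[p] (Fin 3 → ℤ_[p]) //
        (gramMatrix f).det ≠ 0 ∧
          Ideal.span {(gramMatrix f).det} = Ideal.span {(p : ℤ_[p]) ^ n}}) =>
      SimilarForm f.1 g.1) := similarForm_equivalence.comap Subtype.val
    have h := Quot.eqvGen_exact hdd
    rw [hE.eqvGen_iff] at h
    exact rep_inj hp hε n d d' h
  · intro q
    induction q using Quot.ind with
    | mk f =>
      obtain ⟨d, hd⟩ := rep_surj hp hε n f.1 f.2.1 f.2.2
      exact ⟨d, Quot.sound (similar_swap hd)⟩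
end

section
/- Let p be a prime and consider the quaternion ring O = ℍ[ℤ_p, p, p] (so i² = j² = p, ij = −ji). Let I be the left ideal of O generated by the elements i and j. Then I is a two-sided ideal of O, and I is not principal as a left ideal: there is no g ∈ O such that I equals the left ideal O·g generated by g. -/
open Quaternion

theorem mem_aux (p : ℕ) [Fact p.Prime] (x : ℍ[ℤ_[p], (p : ℤ_[p]), (p : ℤ_[p])]) :
    x ∈ (Ideal.span {⟨0, 1, 0, 0⟩, ⟨0, 0, 1, 0⟩} : Ideal ℍ[ℤ_[p], (p : ℤ_[p]), (p : ℤ_[p])]) ↔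
      (p : ℤ_[p]) ∣ x.re := by
  rw [Ideal.mem_span_pair]
  constructor
  · rintro ⟨a, b, rfl⟩
    refine ⟨a.imI + b.imJ, ?_⟩
    simp
    ring
  · rintro ⟨t, ht⟩
    refine ⟨⟨x.imI, t, 0, 0⟩, ⟨x.imJ, x.imK, 0, 0⟩, ?_⟩
    ext <;> simp [ht]

theorem stmt_18 (p : ℕ) [Fact p.Prime] :
    let O := ℍ[ℤ_[p], (p : ℤ_[p]), (p : ℤ_[p])]
    let i : O := ⟨0, 1, 0, 0⟩
    let j : O := ⟨0, 0, 1, 0⟩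
    let I : Ideal O := Ideal.span {i, j}
    (∀ x ∈ I, ∀ r : O, x * r ∈ I) ∧ ¬ ∃ g : O, I = Ideal.span {g} := by
  intro O i j I
  constructor
  · intro x hx r
    obtain ⟨t, ht⟩ := (mem_aux p x).1 hx
    refine (mem_aux p (x * r)).2
      ⟨t * r.re + x.imI * r.imI + x.imJ * r.imJ - p * x.imK * r.imK, ?_⟩
    rw [QuaternionAlgebra.re_mul, ht]
    ring
  · rintro ⟨g, hg⟩
    have hgI : g ∈ I := hg ▸ Ideal.subset_span rfl
    obtain ⟨t, ht⟩ := (mem_aux p g).1 hgI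
    have hi : i ∈ I := Ideal.subset_span (by simp)
    have hj : j ∈ I := Ideal.subset_span (by simp)
    rw [hg, Ideal.mem_span_singleton'] at hi hj
    obtain ⟨a, ha⟩ := hi
    obtain ⟨b, hb⟩ := hj
    have h1 := congrArg QuaternionAlgebra.imI ha
    have h2 := congrArg QuaternionAlgebra.imJ ha
    have h4 := congrArg QuaternionAlgebra.imJ hb
    rw [QuaternionAlgebra.imI_mul, ht] at h1
    rw [QuaternionAlgebra.imJ_mul, ht] at h2 h4
    simp only [i, j] at h1 h2 h4
    have hp : Prime (p : ℤ_[p]) := PadicInt.prime_p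
    have hn : ¬ (p : ℤ_[p]) ∣ 1 := fun h => hp.not_unit (isUnit_of_dvd_one h)
    have d2 : (p : ℤ_[p]) ∣ a.re * g.imJ :=
      ⟨-(a.imI * g.imK + a.imJ * t - a.imK * g.imI), by linear_combination h2⟩
    rcases hp.dvd_or_dvd d2 with ⟨s, hs⟩ | ⟨s, hs⟩
    · rw [hs] at h1
      exact hn ⟨s * g.imI + a.imI * t - a.imJ * g.imK + a.imK * g.imJ,
        by linear_combination -h1⟩
    · rw [hs] at h4
      exact hn ⟨b.re * s + b.imI * g.imK + b.imJ * t - b.imK * g.imI,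
        by linear_combination -h4⟩
end

section
/- Let K be a number field with ring of integers R = 𝓞_K, and let a, d ∈ R be nonzero. Assume: (i) there exists x ∈ R with 4 ∣ (x² − a) in R; (ii) there exists m ∈ R with a ∣ (m² + d) in R; (iii) the ideal (d) of R is squarefree; (iv) for every finite place v of K, ℍ[K_v, a, −d] is a division ring if and only if v divides the ideal (d) (i.e. the quaternion algebra A = ℍ[K, a, −d] has reduced discriminant (d)). Fix such x and m, and in A = ℍ[K, a, −d] set e₁ = (x + i)/2 and e₂ = (m·i + i·j)/a. Then the R-submodule O of A spanned by {1, e₁, e₂, e₁·e₂} is an R-order in A — that is, O is a subring of A containing the image of R, is finitely generated as an R-module, and spans A over K — and O is a maximal order: every subring O′ of A containing R and O that is finitely generated as an R-module equals O. -/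
open Quaternion NumberField IsDedekindDomain

/-- A ring is a division ring if it is nontrivial and every nonzero element is invertible. -/
def IsDivisionRingPred (A : Type*) [Ring A] : Prop :=
  (1 : A) ≠ 0 ∧ ∀ x : A, x ≠ 0 → IsUnit x

section Helpers
open scoped WithZero Topology
open Filter

theorem hensel_quad {F : Type*} [Field F] [Valued F ℤᵐ⁰] [CompleteSpace F] [T0Space F]
    (b e r : F) (hd : Valued.v (b ^ 2 - 4 * e) = (1 : ℤᵐ⁰))
    (hr : Valued.v (r ^ 2 - b * r + e) < (1 : ℤᵐ⁰)) : ∃ L : F, L ^ 2 - b * L + e = 0 := by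
  let v : Valuation F ℤᵐ⁰ := Valued.v
  let f : F → F := fun t => t ^ 2 - b * t + e
  let s : ℕ → F := fun n => Nat.rec r (fun _ t => t - f t / (2 * t - b)) n
  have hs0 : s 0 = r := rfl
  have hs : ∀ n, s (n + 1) = s n - f (s n) / (2 * s n - b) := fun n => rfl
  have h4 : v 4 ≤ 1 := by
    have : (4 : F) ∈ v.integer := by
      have := natCast_mem (v.integer) 4
      simpa using this
    exact this
  have hder : ∀ t, v (f t) < 1 → v (2 * t - b) = 1 := by
    intro t ht
    have h1 : (2 * t - b) ^ 2 = (b ^ 2 - 4 * e) + 4 * f t := by simp only [f]; ring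
    have h2 : v (4 * f t) < 1 := by
      rw [map_mul]; 
      calc v 4 * v (f t) ≤ 1 * v (f t) := mul_le_mul_left h4 _
        _ < 1 := by rwa [one_mul]
    have h3 : v ((2 * t - b) ^ 2) = 1 := by
      rw [h1, Valuation.map_add_eq_of_lt_left, hd]
      rw [hd]; exact h2
    rw [map_pow] at h3
    exact (pow_eq_one_iff.mp h3).resolve_right two_ne_zero
  have hstep : ∀ t, v (f t) < 1 → v (f (t - f t / (2 * t - b))) = v (f t) ^ 2 := by
    intro t ht
    have h1 := hder t ht
    have h2 : 2 * t - b ≠ 0 := by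
      intro h; rw [h, map_zero] at h1; exact zero_ne_one h1
    have h3 : f (t - f t / (2 * t - b)) = (f t / (2 * t - b)) ^ 2 := by
      have : f t = (f t / (2 * t - b)) * (2 * t - b) := by field_simp
      generalize f t / (2 * t - b) = q at *
      simp only [f] at *
      linear_combination this
    rw [h3, map_pow, map_div₀, h1, div_one]
  have hdec : ∀ n, v (f (s n)) ≤ v (f r) ^ (n + 1) := by
    intro n
    induction n with
    | zero => simp [hs0]
    | succ k ih =>
      have hle : v (f r) ^ (k + 1) ≤ v (f r) := pow_le_of_le_one zero_le hr.le (by simp)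
      have hlt : v (f (s k)) < 1 := (ih.trans hle).trans_lt hr
      rw [hs, hstep _ hlt, pow_two, pow_succ (v (f r)) (k + 1)]
      exact mul_le_mul' ih (ih.trans hle)
  have hlt : ∀ n, v (f (s n)) < 1 := fun n =>
    (hdec n).trans_lt (pow_lt_one₀ zero_le hr (by simp))
  have htend : ∀ g : ℕ → F, (∀ n, v (g n) = v (f (s n))) → Tendsto g atTop (𝓝 0) := by
    intro g hg
    rw [Filter.tendsto_def]
    intro U hU
    obtain ⟨γ, hγ⟩ := Valued.mem_nhds_zero.mp hU
    have hpos := MonoidWithZeroHom.ValueGroup₀.embedding_unit_pos γ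
    obtain ⟨N, hN⟩ := exists_pow_lt₀ hr (Units.mk0 _ hpos.ne')
    filter_upwards [eventually_ge_atTop N] with n hn
    apply hγ
    show Valued.v.restrict (g n) < γ.1
    rw [Valuation.restrict_lt_iff_lt_embedding]
    refine lt_of_le_of_lt ?_ hN
    have h5 := hg n
    have h6 := hdec n
    rw [← h5] at h6
    refine h6.trans ?_
    exact pow_le_pow_of_le_one zero_le hr.le (by omega)
  have hna : NonarchimedeanRing F := by
    have h := (Valuation.subgroups_basis (Valued.v : Valuation F ℤᵐ⁰)).nonarchimedean
    have h2 := Valued.toUniformSpace_eq F ℤᵐ⁰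
    rw [h2]
    exact h
  have hc : CauchySeq s := by
    apply NonarchimedeanAddGroup.cauchySeq_of_tendsto_sub_nhds_zero
    apply htend
    intro n
    rw [hs, sub_sub_cancel_left, Valuation.map_neg, map_div₀, hder _ (hlt n), div_one]
  obtain ⟨L, hL⟩ := cauchySeq_tendsto_of_complete hc
  refine ⟨L, ?_⟩
  have hcont : Continuous f := by simp only [f]; fun_prop
  exact tendsto_nhds_unique ((hcont.tendsto L).comp hL) (htend _ fun n => rfl)

theorem aniso_val {K : Type*} [Field K] (v : Valuation K ℤᵐ⁰) (b e : K) (hb : v b ≤ 1) (he : v e ≤ 1)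
    (h : ∀ r, ¬ v (r ^ 2 - b * r + e) < 1) (s t : K) :
    v (s ^ 2 + b * s * t + e * t ^ 2) = max (v s) (v t) ^ 2 := by
  rcases le_or_gt (v s) (v t) with hst | hst
  · rw [max_eq_right hst]
    rcases eq_or_ne t 0 with rfl | ht
    · have : v s = 0 := by simpa using hst
      have : s = 0 := by simpa using this
      simp [this]
    · apply le_antisymm
      · refine v.map_add_le (v.map_add_le ?_ ?_) ?_
        · rw [map_pow]; gcongr
        · rw [map_mul, map_mul, pow_two]
          calc v b * v s * v t ≤ 1 * v t * v t := by gcongr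
            _ = _ := by rw [one_mul]
        · rw [map_mul, map_pow]
          calc v e * v t ^ 2 ≤ 1 * v t ^ 2 := by gcongr
            _ = _ := by rw [one_mul]
      · have h1 : s ^ 2 + b * s * t + e * t ^ 2 = ((-s / t) ^ 2 - b * (-s / t) + e) * t ^ 2 := by
          field_simp; ring
        have h2 := not_lt.mp (h (-s / t))
        rw [h1, map_mul, map_pow]
        calc v t ^ 2 = 1 * v t ^ 2 := by rw [one_mul]
          _ ≤ _ := by gcongr
  · rw [max_eq_left hst.le, add_assoc, Valuation.map_add_eq_of_lt_left, map_pow]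
    have h0 : 0 < v s := lt_of_le_of_lt zero_le hst
    rw [map_pow]
    refine v.map_add_lt ?_ ?_
    · rw [map_mul, map_mul, pow_two]
      calc v b * v s * v t ≤ 1 * v s * v t := by gcongr
        _ = v s * v t := by rw [one_mul]
        _ < v s * v s := by gcongr
    · rw [map_mul, map_pow]
      calc v e * v t ^ 2 ≤ 1 * v t ^ 2 := by gcongr
        _ = v t ^ 2 := by rw [one_mul]
        _ < v s ^ 2 := by gcongr; exact zero_le

theorem main_val {K : Type*} [Field K] (v : Valuation K ℤᵐ⁰) (Q₁ E Q₂ C : K) (S T : ℤᵐ⁰)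
    (h1 : v Q₁ = S ^ 2) (hE : v E = WithZero.exp (-1 : ℤ)) (h2 : v Q₂ = T ^ 2)
    (hC : v C ≤ WithZero.exp (-1 : ℤ) * S * T) (hN : v (Q₁ + (E * Q₂ + C)) ≤ 1) :
    S ≤ 1 ∧ T ≤ 1 := by
  have hEQ : v (E * Q₂) = WithZero.exp (-1 : ℤ) * T ^ 2 := by rw [map_mul, hE, h2]
  rcases le_or_gt T S with hTS | hTS
  · rcases eq_or_ne S 0 with hS | hS
    · have : T = 0 := by simpa [hS] using hTS
      simp [hS, this]
    · obtain ⟨s, rfl⟩ : ∃ s, S = WithZero.exp s := ⟨_, (WithZero.exp_log hS).symm⟩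
      have hS1 : WithZero.exp (-1 : ℤ) * WithZero.exp s ^ 2 < WithZero.exp s ^ 2 := by
        rw [← WithZero.exp_nsmul, ← WithZero.exp_add, WithZero.exp_lt_exp]; omega
      have h3 : v (Q₁ + (E * Q₂ + C)) = v Q₁ := by
        apply Valuation.map_add_eq_of_lt_left
        rw [h1]
        refine v.map_add_lt ?_ ?_
        · rw [hEQ]
          refine lt_of_le_of_lt ?_ hS1
          gcongr
        · refine hC.trans_lt (lt_of_le_of_lt ?_ hS1)
          rw [pow_two, mul_assoc]
          gcongr
      rw [h3, h1, ← WithZero.exp_nsmul, ← WithZero.exp_zero, WithZero.exp_le_exp] at hN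
      have : WithZero.exp s ≤ 1 := by
        rw [← WithZero.exp_zero, WithZero.exp_le_exp]
        simp at hN; omega
      exact ⟨this, hTS.trans this⟩
  · have hT : T ≠ 0 := (lt_of_le_of_lt zero_le hTS).ne'
    obtain ⟨t, rfl⟩ : ∃ s, T = WithZero.exp s := ⟨_, (WithZero.exp_log hT).symm⟩
    have hS1 : S ≤ WithZero.exp (t - 1) := by
      rcases eq_or_ne S 0 with hS | hS
      · simp [hS]
      · obtain ⟨s, rfl⟩ : ∃ s, S = WithZero.exp s := ⟨_, (WithZero.exp_log hS).symm⟩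
        rw [WithZero.exp_lt_exp] at hTS
        rw [WithZero.exp_le_exp]; omega
    have h3 : v (E * Q₂ + (C + Q₁)) = v (E * Q₂) := by
      apply Valuation.map_add_eq_of_lt_left
      rw [hEQ]
      refine v.map_add_lt ?_ ?_
      · refine hC.trans_lt ?_
        calc WithZero.exp (-1 : ℤ) * S * WithZero.exp t 
            ≤ WithZero.exp (-1 : ℤ) * WithZero.exp (t - 1) * WithZero.exp t := by gcongr
          _ < _ := by
            rw [← WithZero.exp_nsmul, ← WithZero.exp_add, ← WithZero.exp_add, ← WithZero.exp_add, WithZero.exp_lt_exp]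
            simp; omega
      · rw [h1]
        calc S ^ 2 ≤ WithZero.exp (t - 1) ^ 2 := by gcongr
          _ < _ := by
            rw [← WithZero.exp_nsmul, ← WithZero.exp_nsmul, ← WithZero.exp_add, WithZero.exp_lt_exp]
            simp; omega
    rw [show Q₁ + (E * Q₂ + C) = E * Q₂ + (C + Q₁) by ring, h3, hEQ, ← WithZero.exp_nsmul, ← WithZero.exp_add, ← WithZero.exp_zero, WithZero.exp_le_exp] at hN
    have : WithZero.exp t ≤ 1 := by
      rw [← WithZero.exp_zero, WithZero.exp_le_exp]
      simp at hN; omega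
    exact ⟨hTS.le.trans this, this⟩

/-- local computation at ramified places. -/
theorem local_case {K : Type*} [Field K] (v : Valuation K ℤᵐ⁰) (a d x m n c : K)
    (hn : x ^ 2 - a = 4 * n) (hc : m ^ 2 + d = a * c)
    (va : v a ≤ 1) (vx : v x ≤ 1) (vm : v m ≤ 1) (vn : v n ≤ 1) (vc : v c ≤ 1) (v2 : v 2 ≤ 1)
    (ha0 : a ≠ 0)
    (vd : v d = WithZero.exp (-1 : ℤ))
    (an₁ : v a = 1 → ∀ r, ¬ v (r ^ 2 - x * r + n) < 1)
    (an₂ : v (4 * c) = 1 → ∀ r, ¬ v (r ^ 2 - 0 * r + -c) < 1)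
    (α β γ δ : K)
    (hN : v ((α ^ 2 + x * α * β + n * β ^ 2) - c * (γ ^ 2 + x * γ * δ + n * δ ^ 2)
      - m * (β * γ - α * δ)) ≤ 1) : v α ≤ 1 ∧ v β ≤ 1 ∧ v γ ≤ 1 ∧ v δ ≤ 1 := by
  have hmul : ∀ {p q : K}, v p ≤ 1 → v q ≤ 1 → v (p * q) ≤ 1 := by
    intro p q hp hq; rw [map_mul]; exact mul_le_one' hp hq
  rcases va.eq_or_lt with va1 | va1
  · have an := an₁ va1
    have vai : v a⁻¹ ≤ 1 := by rw [map_inv₀, va1, inv_one]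
    have q1 := aniso_val v x n vx vn an (α + m * (-x * γ - 2 * n * δ) * a⁻¹)
      (β + m * (2 * γ + x * δ) * a⁻¹)
    have q2 := aniso_val v x n vx vn an γ δ
    have := main_val v _ (-d * a⁻¹) _ 0 _ _ q1 (by
      rw [map_mul, Valuation.map_neg, map_inv₀, va1, vd]; simp) q2 (by simp) (by
      convert hN using 2
      have : d = a * c - m ^ 2 := by linear_combination hc
      have hn' : a = x ^ 2 - 4 * n := by linear_combination -hn
      subst this
      field_simp
      subst hn'
      ring)
    obtain ⟨hS, hT⟩ := this
    obtain ⟨hα, hβ⟩ := max_le_iff.mp hS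
    obtain ⟨hγ, hδ⟩ := max_le_iff.mp hT
    refine ⟨?_, ?_, hγ, hδ⟩
    · have := v.map_sub_le hα (hmul (hmul vm (v.map_sub_le (hmul (by rwa [Valuation.map_neg]) hγ) (hmul (hmul v2 vn) hδ))) vai : v (m * (-x * γ - 2 * n * δ) * a⁻¹) ≤ 1)
      simpa using this
    · have := v.map_sub_le hβ (hmul (hmul vm (v.map_add_le (hmul v2 hγ) (hmul vx hδ))) vai : v (m * (2 * γ + x * δ) * a⁻¹) ≤ 1)
      simpa using this
  · have lt_iff : ∀ {z : K}, v z < 1 → v z ≤ WithZero.exp (-1 : ℤ) := by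
      intro z hz
      rcases eq_or_ne (v z) 0 with h | h
      · simp [h]
      · obtain ⟨s, hs⟩ : ∃ s, v z = WithZero.exp s := ⟨_, (WithZero.exp_log h).symm⟩
        rw [hs, ← WithZero.exp_zero, WithZero.exp_lt_exp] at hz
        rw [hs, WithZero.exp_le_exp]; omega
    have e1 : WithZero.exp (-1 : ℤ) < 1 := by
      rw [← WithZero.exp_zero, WithZero.exp_lt_exp]; omega
    have e2 : WithZero.exp (-1 : ℤ) * WithZero.exp (-1 : ℤ) < WithZero.exp (-1 : ℤ) := by
      rw [← WithZero.exp_add, WithZero.exp_lt_exp]; omega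
    have sqlt : ∀ {z : K}, v z < 1 → v (z ^ 2) < WithZero.exp (-1 : ℤ) := by
      intro z hz
      rw [map_pow, pow_two]
      exact lt_of_le_of_lt (mul_le_mul' (lt_iff hz) (lt_iff hz)) e2
    have vac1 : v (a * c) < 1 := by
      rw [map_mul]
      exact lt_of_le_of_lt (mul_le_mul' le_rfl vc) (by rwa [mul_one])
    have vm1 : v m < 1 := by
      have : v (m ^ 2) < 1 := by
        rw [show m ^ 2 = a * c - d by linear_combination hc]
        exact v.map_sub_lt vac1 (by rwa [vd])
      rw [map_pow] at this
      by_contra h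
      exact absurd this (not_lt.mpr (one_le_pow₀ (not_lt.mp h)))
    have vac : v (a * c) = WithZero.exp (-1 : ℤ) := by
      rw [← hc, Valuation.map_add_eq_of_lt_right, vd]
      rw [vd]; exact sqlt vm1
    have vae : v a = WithZero.exp (-1 : ℤ) := by
      apply le_antisymm (lt_iff va1)
      rw [← vac, map_mul]
      calc v a * v c ≤ v a * 1 := by gcongr
        _ = _ := mul_one _
    have vc1 : v c = 1 := by
      rw [map_mul, vae] at vac
      exact (mul_eq_left₀ WithZero.exp_ne_zero).mp vac
    have v21 : v 2 = 1 := by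
      apply le_antisymm v2
      by_contra h
      have h4 : v (4 * n) < WithZero.exp (-1 : ℤ) := by
        rw [map_mul, show (4 : K) = 2 ^ 2 by norm_num]
        calc v (2 ^ 2) * v n ≤ v (2 ^ 2) * 1 := by gcongr
          _ = v (2 ^ 2) := mul_one _
          _ < _ := sqlt (not_le.mp h)
      have hx2 : v (x ^ 2) = WithZero.exp (-1 : ℤ) := by
        rw [show x ^ 2 = a + 4 * n by linear_combination hn, Valuation.map_add_eq_of_lt_left, vae]
        rwa [vae]
      rw [map_pow] at hx2
      have hx0 : v x ≠ 0 := by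
        intro h0; rw [h0] at hx2; simp at hx2; exact WithZero.exp_ne_zero hx2.symm
      obtain ⟨s, hs⟩ : ∃ s, v x = WithZero.exp s := ⟨_, (WithZero.exp_log hx0).symm⟩
      rw [hs, ← WithZero.exp_nsmul, WithZero.exp_inj] at hx2
      simp at hx2; omega
    have h20 : (2 : K) ≠ 0 := by
      intro h; rw [h, map_zero] at v21; exact zero_ne_one v21
    have v41 : v 4 = 1 := by rw [show (4 : K) = 2 ^ 2 by norm_num, map_pow, v21, one_pow]
    have an := an₂ (by rw [map_mul, v41, vc1, one_mul])
    have v2i : v (2⁻¹) = 1 := by rw [map_inv₀, v21, inv_one]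
    have q1 := aniso_val v 0 (-c) (by simp) (by rwa [Valuation.map_neg]) an (α + x * β * 2⁻¹) (γ + x * δ * 2⁻¹)
    have q2 := aniso_val v 0 (-c) (by simp) (by rwa [Valuation.map_neg]) an β δ
    have := main_val v _ (-a * (2⁻¹ * 2⁻¹)) _ (- m * (β * (γ + x * δ * 2⁻¹) - (α + x * β * 2⁻¹) * δ)) _ _ q1 (by
      rw [map_mul, map_mul, v2i, Valuation.map_neg, vae]; simp) q2 (by
        rw [map_mul, Valuation.map_neg, mul_assoc (WithZero.exp (-1 : ℤ))]
        refine mul_le_mul' (lt_iff vm1) ?_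
        refine v.map_sub_le ?_ ?_
        · rw [map_mul, mul_comm]
          exact mul_le_mul' (le_max_right _ _) (le_max_left _ _)
        · rw [map_mul]
          exact mul_le_mul' (le_max_left _ _) (le_max_right _ _)) (by
      convert hN using 2
      have hn' : a = x ^ 2 - 4 * n := by linear_combination -hn
      subst hn'
      field_simp
      ring)
    obtain ⟨hS, hT⟩ := this
    obtain ⟨hα, hγ⟩ := max_le_iff.mp hS
    obtain ⟨hβ, hδ⟩ := max_le_iff.mp hT
    refine ⟨?_, hβ, ?_, hδ⟩
    · have := v.map_sub_le hα (hmul (hmul vx hβ) v2i.le)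
      simpa using this
    · have := v.map_sub_le hγ (hmul (hmul vx hδ) v2i.le)
      simpa using this

theorem not_division {F : Type*} [Field F] {p q : F} (w : ℍ[F, p, q]) (s : F)
    (hw : w * w = algebraMap F _ (s ^ 2)) (hn : ∀ t : F, w ≠ algebraMap F _ t) :
    ¬ IsDivisionRingPred ℍ[F, p, q] := by
  rintro ⟨-, h⟩
  have h1 : w - algebraMap F _ s ≠ 0 := fun h0 => hn s (sub_eq_zero.mp h0)
  have h2 : (w - algebraMap F _ s) * (w + algebraMap F _ s) = 0 := by
    have hcomm := (Algebra.commutes s w)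
    rw [sub_mul, mul_add, mul_add, hw, hcomm, ← map_mul, pow_two]
    abel
  have h3 := (h _ h1).mul_right_eq_zero.mp h2
  apply hn (-s)
  rw [map_neg]
  exact eq_neg_of_add_eq_zero_left h3

theorem integral_quat {R K : Type*} [CommRing R] [IsDomain R] [IsIntegrallyClosed R] [Field K]
    [Algebra R K] [IsFractionRing R K] {p q : K} (y : ℍ[K, p, q]) (hy : IsIntegral R y) :
    2 * y.re ∈ (algebraMap R K).range ∧
    y.re ^ 2 - p * y.imI ^ 2 - q * y.imJ ^ 2 + p * q * y.imK ^ 2 ∈ (algebraMap R K).range := by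
  by_cases hK : y ∈ (algebraMap K ℍ[K, p, q]).range
  · obtain ⟨k, rfl⟩ := hK
    have hk : IsIntegral R k :=
      (isIntegral_algebraMap_iff (FaithfulSMul.algebraMap_injective K ℍ[K, p, q])).mp hy
    obtain ⟨r, rfl⟩ := IsIntegrallyClosed.isIntegral_iff.mp hk
    exact ⟨⟨2 * r, by simp [map_ofNat]⟩, ⟨r ^ 2, by simp⟩⟩
  · set T := 2 * y.re with hT
    set N := y.re ^ 2 - p * y.imI ^ 2 - q * y.imJ ^ 2 + p * q * y.imK ^ 2 with hN
    let g : Polynomial K := Polynomial.X ^ 2 + (Polynomial.C (-T) * Polynomial.X + Polynomial.C N)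
    have hgd : (Polynomial.C (-T) * Polynomial.X + Polynomial.C N).degree < ((2 : ℕ) : WithBot ℕ) :=
      lt_of_le_of_lt (Polynomial.degree_linear_le) (by norm_num)
    have hgm : g.Monic := Polynomial.monic_X_pow_add hgd
    have hgn : g.natDegree = 2 := by
      simp only [g]; compute_degree!
    have hg0 : Polynomial.aeval y g = 0 := by
      simp only [g, map_add, map_mul, map_pow, Polynomial.aeval_X, Polynomial.aeval_C]
      ext <;> simp [pow_two] <;> simp only [hT, hN] <;> ring
    have hyK : IsIntegral K y := ⟨g, hgm, hg0⟩
    have h2 : 2 ≤ (minpoly K y).natDegree := (minpoly.two_le_natDegree_iff hyK).mpr hK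
    have hgmin : g = minpoly K y :=
      Polynomial.eq_of_monic_of_dvd_of_natDegree_le (minpoly.monic hyK) hgm (minpoly.dvd K y hg0)
        (by rw [hgn]; exact h2)
    obtain ⟨f, hf, hf0⟩ := hy
    have hdvd : g ∣ f.map (algebraMap R K) := by
      rw [hgmin]
      apply minpoly.dvd
      rw [Polynomial.aeval_map_algebraMap]
      exact hf0
    obtain ⟨g', hg'⟩ := IsIntegrallyClosed.eq_map_mul_C_of_dvd K hf hdvd
    rw [hgm.leadingCoeff, Polynomial.C_1, mul_one] at hg'
    constructor
    · refine ⟨-(g'.coeff 1), ?_⟩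
      have : (g'.map (algebraMap R K)).coeff 1 = g.coeff 1 := by rw [hg']
      rw [Polynomial.coeff_map] at this
      rw [map_neg, this]
      simp [g, Polynomial.coeff_X_pow, Polynomial.coeff_C]
    · refine ⟨(g'.coeff 0), ?_⟩
      have : (g'.map (algebraMap R K)).coeff 0 = g.coeff 0 := by rw [hg']
      rw [Polynomial.coeff_map] at this
      rw [this]
      simp [g, Polynomial.coeff_X_pow, Polynomial.coeff_C]


theorem not_div1 {F : Type*} [Field F] {p q x n L : F} (h : x ^ 2 - p = 4 * n)
    (hL : L ^ 2 - x * L + n = 0) : ¬ IsDivisionRingPred ℍ[F, p, q] := by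
  refine not_division ⟨0, 1, 0, 0⟩ (2 * L - x) ?_ ?_
  · have : (2 * L - x) ^ 2 = p := by linear_combination 4 * hL + h
    rw [this]
    ext <;> simp
  · intro t h
    have := congrArg QuaternionAlgebra.imI h
    simp at this

theorem not_div2 {F : Type*} [Field F] {p q m c L : F} (h : m ^ 2 - q = p * c)
    (hL : L ^ 2 = c) : ¬ IsDivisionRingPred ℍ[F, p, q] := by
  refine not_division ⟨0, m, 0, 1⟩ (p * L) ?_ ?_
  · have : (p * L) ^ 2 = p * m * m - p * q := by rw [mul_pow, hL]; linear_combination -p * h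
    rw [this]
    ext
    · simp; try ring
    all_goals simp
  · intro t h
    have := congrArg QuaternionAlgebra.imK h
    simp at this

theorem he1_lem {K : Type*} [Field K] (a d x : K) :
    (2 : K)⁻¹ • (algebraMap K ℍ[K, a, -d] x + ⟨0, 1, 0, 0⟩) = ⟨x / 2, 1 / 2, 0, 0⟩ := by
  ext <;> simp <;> ring

theorem he2_lem {K : Type*} [Field K] (a d m : K) :
    a⁻¹ • (m • (⟨0, 1, 0, 0⟩ : ℍ[K, a, -d]) + ⟨0, 1, 0, 0⟩ * ⟨0, 0, 1, 0⟩)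
      = ⟨0, m / a, 0, 1 / a⟩ := by
  ext <;> simp <;> ring

theorem quat_coord {K : Type*} [Field K] [CharZero K] (a d x m : K) (ha : a ≠ 0)
    (e₁ e₂ e₃ : ℍ[K, a, -d])
    (h1 : e₁ = ⟨x / 2, 1 / 2, 0, 0⟩) (h2 : e₂ = ⟨0, m / a, 0, 1 / a⟩)
    (h3 : e₃ = ⟨m / 2, x * m / (2 * a), 1 / 2, x / (2 * a)⟩) (y : ℍ[K, a, -d]) :
    ∃ α β γ δ : K, y = α • (1 : ℍ[K, a, -d]) + β • e₁ + γ • e₂ + δ • e₃ := by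
  refine ⟨y.re - (y.imI - m * y.imK) * x - y.imJ * m, 2 * (y.imI - m * y.imK),
    a * y.imK - x * y.imJ, 2 * y.imJ, ?_⟩
  subst h1 h2 h3
  ext <;> simp <;> field_simp <;> ring

theorem quat_comps {K : Type*} [Field K] [CharZero K] (a d x m : K)
    (e₁ e₂ e₃ : ℍ[K, a, -d])
    (h1 : e₁ = ⟨x / 2, 1 / 2, 0, 0⟩) (h2 : e₂ = ⟨0, m / a, 0, 1 / a⟩)
    (h3 : e₃ = ⟨m / 2, x * m / (2 * a), 1 / 2, x / (2 * a)⟩) (y : ℍ[K, a, -d])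
    (α β γ δ : K) (hy : y = α • (1 : ℍ[K, a, -d]) + β • e₁ + γ • e₂ + δ • e₃) :
    y.re = α + β * (x / 2) + δ * (m / 2) ∧
    y.imI = β / 2 + γ * (m / a) + δ * (x * m / (2 * a)) ∧
    y.imJ = δ / 2 ∧ y.imK = γ / a + δ * (x / (2 * a)) := by
  subst h1 h2 h3 hy
  refine ⟨?_, ?_, ?_, ?_⟩ <;> simp <;> ring

theorem quat_dual {K : Type*} [Field K] [CharZero K] (a d x m n c : K) (ha : a ≠ 0)
    (hn : x ^ 2 - a = 4 * n) (hc : m ^ 2 + d = a * c) (e₁ e₂ e₃ : ℍ[K, a, -d])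
    (h1 : e₁ = ⟨x / 2, 1 / 2, 0, 0⟩) (h2 : e₂ = ⟨0, m / a, 0, 1 / a⟩)
    (h3 : e₃ = ⟨m / 2, x * m / (2 * a), 1 / 2, x / (2 * a)⟩) (y : ℍ[K, a, -d])
    (α β γ δ : K) (hy : y = α • (1 : ℍ[K, a, -d]) + β • e₁ + γ • e₂ + δ • e₃)
    (t0 t1 t2 t3 N : K) (ht0 : t0 = 2 * y.re) (ht1 : t1 = 2 * (y * e₁).re)
    (ht2 : t2 = 2 * (y * e₂).re) (ht3 : t3 = 2 * (y * e₃).re)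
    (hN : N = y.re ^ 2 - a * y.imI ^ 2 - -d * y.imJ ^ 2 + a * -d * y.imK ^ 2) :
    -(c * (2 * n * t0 - x * (x * t0 - t1)) + m * (m * t0 - t3)) = d * α ∧
    c * (x * t0 - 2 * (x * t0 - t1)) - m * t2 = d * β ∧
    - 2 * n * t2 - x * (m * t0 - t3) + m * (x * t0 - t1) = d * γ ∧
    x * t2 + 2 * (m * t0 - t3) - m * t0 = d * δ ∧
    N = (α ^ 2 + x * α * β + n * β ^ 2) - c * (γ ^ 2 + x * γ * δ + n * δ ^ 2)
        - m * (β * γ - α * δ) := by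
  obtain ⟨hre, hI, hJ, hK⟩ := quat_comps a d x m e₁ e₂ e₃ h1 h2 h3 y α β γ δ hy
  rw [h1] at ht1
  rw [h2] at ht2
  rw [h3] at ht3
  simp only [QuaternionAlgebra.re_mul] at ht1 ht2 ht3
  rw [hre, hI, hJ, hK] at ht1 ht2 ht3 hN
  rw [hre] at ht0
  clear hy hre hI hJ hK h1 h2 h3
  have hn' : n = (x ^ 2 - a) / 4 := by rw [hn]; field_simp
  have hd' : d = a * c - m ^ 2 := by linear_combination hc
  rw [ht0, ht1, ht2, ht3, hN]
  clear ht0 ht1 ht2 ht3 hN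
  rw [hn', hd']
  refine ⟨?_, ?_, ?_, ?_, ?_⟩ <;> field_simp <;> ring

theorem quat_mult {K : Type*} [Field K] [CharZero K] (a d x m n c : K) (ha : a ≠ 0)
    (hn : x ^ 2 - a = 4 * n) (hc : m ^ 2 + d = a * c) (e₁ e₂ : ℍ[K, a, -d])
    (h1 : e₁ = ⟨x / 2, 1 / 2, 0, 0⟩) (h2 : e₂ = ⟨0, m / a, 0, 1 / a⟩) :
    e₁ * e₂ = ⟨m / 2, x * m / (2 * a), 1 / 2, x / (2 * a)⟩ ∧
    e₁ * e₁ = x • e₁ - n • (1 : ℍ[K, a, -d]) ∧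
    e₂ * e₂ = c • (1 : ℍ[K, a, -d]) ∧
    e₂ * e₁ = m • (1 : ℍ[K, a, -d]) + x • e₂ - e₁ * e₂ := by
  have hn' : n = (x ^ 2 - a) / 4 := by rw [hn]; field_simp
  have hd' : d = a * c - m ^ 2 := by linear_combination hc
  subst hn' hd' h1 h2
  refine ⟨?_, ?_, ?_, ?_⟩ <;> ext <;> simp <;> field_simp <;> ring

theorem local_sq (K : Type*) [Field K] [NumberField K] (v : HeightOneSpectrum (𝓞 K)) (b e r : K)
    (hd : v.valuation K (b ^ 2 - 4 * e) = 1) (hr : v.valuation K (r ^ 2 - b * r + e) < 1) :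
    ∃ L : v.adicCompletion K, L ^ 2 - algebraMap K _ b * L + algebraMap K _ e = 0 := by
  have key : ∀ k : K, Valued.v (algebraMap K (v.adicCompletion K) k) = v.valuation K k :=
    fun k => v.valuedAdicCompletion_eq_valuation' k
  apply hensel_quad (F := v.adicCompletion K) _ _ (algebraMap K _ r)
  · rw [← hd, ← key]; congr 1; simp [map_ofNat]
  · rw [← key] at hr; convert hr using 2; simp

theorem val_d (K : Type*) [Field K] [NumberField K] (v : HeightOneSpectrum (𝓞 K)) (d : 𝓞 K)
    (hsq : Squarefree (Ideal.span {d} : Ideal (𝓞 K))) (hv : v.asIdeal ∣ Ideal.span {d}) :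
    v.valuation K (algebraMap (𝓞 K) K d) = WithZero.exp (-1 : ℤ) := by
  rw [HeightOneSpectrum.valuation_of_algebraMap]
  have h1 := (v.intValuation_le_pow_iff_dvd d 1).mpr (by simpa using hv)
  have h2 : ¬ v.intValuation d ≤ WithZero.exp (-((2 : ℕ) : ℤ)) := by
    rw [v.intValuation_le_pow_iff_dvd]
    intro h
    rw [pow_two] at h
    exact v.prime.not_isUnit (hsq _ h)
  rw [not_le] at h2
  have h0 : v.intValuation d ≠ 0 := (lt_of_le_of_lt zero_le h2).ne'
  obtain ⟨s, hs⟩ : ∃ s, v.intValuation d = WithZero.exp s := ⟨_, (WithZero.exp_log h0).symm⟩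
  rw [hs, WithZero.exp_le_exp] at h1
  rw [hs, WithZero.exp_lt_exp] at h2
  rw [hs, WithZero.exp_inj]
  push_cast at h1 h2
  omega

theorem local_final (K : Type*) [Field K] [NumberField K] (v : HeightOneSpectrum (𝓞 K))
    (a d x m n c : 𝓞 K) (ha : a ≠ 0) (hn : x ^ 2 - a = 4 * n) (hc : m ^ 2 + d = a * c)
    (hsqfree : Squarefree (Ideal.span {d} : Ideal (𝓞 K))) (hv : v.asIdeal ∣ Ideal.span {d})
    (hram : IsDivisionRingPred ℍ[v.adicCompletion K,
          algebraMap K (v.adicCompletion K) (algebraMap (𝓞 K) K a),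
          algebraMap K (v.adicCompletion K) (-(algebraMap (𝓞 K) K d))])
    (α β γ δ : K)
    (hN : v.valuation K ((α ^ 2 + x * α * β + n * β ^ 2) - c * (γ ^ 2 + x * γ * δ + n * δ ^ 2)
      - m * (β * γ - α * δ)) ≤ 1) :
    v.valuation K α ≤ 1 ∧ v.valuation K β ≤ 1 ∧ v.valuation K γ ≤ 1 ∧ v.valuation K δ ≤ 1 := by
  have le1 : ∀ r : 𝓞 K, v.valuation K (algebraMap (𝓞 K) K r) ≤ 1 := fun r => v.valuation_le_one r
  have hn1 : (algebraMap (𝓞 K) K x) ^ 2 - algebraMap (𝓞 K) K a = 4 * algebraMap (𝓞 K) K n := by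
    have := congrArg (algebraMap (𝓞 K) K) hn
    simpa [map_ofNat] using this
  have hc1 : (algebraMap (𝓞 K) K m) ^ 2 + algebraMap (𝓞 K) K d = algebraMap (𝓞 K) K a * algebraMap (𝓞 K) K c := by
    have := congrArg (algebraMap (𝓞 K) K) hc
    simpa using this
  have ha1 : algebraMap (𝓞 K) K a ≠ 0 := by simpa using ha
  refine local_case (v.valuation K) (algebraMap (𝓞 K) K a) (algebraMap (𝓞 K) K d)
    (algebraMap (𝓞 K) K x) (algebraMap (𝓞 K) K m) (algebraMap (𝓞 K) K n) (algebraMap (𝓞 K) K c)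
    hn1 hc1 (le1 _) (le1 _) (le1 _) (le1 _) (le1 _) (by simpa [map_ofNat] using le1 2) ha1
    (val_d K v d hsqfree hv) ?_ ?_ α β γ δ hN
  · intro va r hr
    obtain ⟨L, hL⟩ := local_sq K v _ _ r (by
      rw [← va]; congr 1; linear_combination hn1) hr
    have hn2 := congrArg (algebraMap K (v.adicCompletion K)) hn1
    simp only [map_sub, map_pow, map_mul, map_ofNat] at hn2
    exact not_div1 hn2 hL hram
  · intro va r hr
    obtain ⟨L, hL⟩ := local_sq K v _ _ r (by
      rw [← va]; congr 1; ring) hr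
    have hc2 := congrArg (algebraMap K (v.adicCompletion K)) hc1
    simp only [map_add, map_pow, map_mul] at hc2
    simp only [map_zero, map_neg, zero_mul, sub_zero] at hL
    refine not_div2 (m := algebraMap K _ (algebraMap (𝓞 K) K m)) (L := L) ?_
      (eq_of_sub_eq_zero (by rw [sub_eq_add_neg]; exact hL)) hram
    rw [map_neg, sub_neg_eq_add]
    exact hc2

theorem span_closed {R A : Type*} [CommRing R] [Ring A] [Algebra R A] (x m n c : R) (e₁ e₂ : A)
    (h11 : e₁ * e₁ = x • e₁ - n • (1 : A)) (h22 : e₂ * e₂ = c • (1 : A))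
    (h21 : e₂ * e₁ = m • (1 : A) + x • e₂ - e₁ * e₂) :
    ∀ y ∈ Submodule.span R {1, e₁, e₂, e₁ * e₂}, ∀ z ∈ Submodule.span R {1, e₁, e₂, e₁ * e₂},
      y * z ∈ Submodule.span R {1, e₁, e₂, e₁ * e₂} := by
  set O := Submodule.span R {1, e₁, e₂, e₁ * e₂} with hO
  have m1 : (1 : A) ∈ O := Submodule.subset_span (by simp)
  have me1 : e₁ ∈ O := Submodule.subset_span (by simp)
  have me2 : e₂ ∈ O := Submodule.subset_span (by simp)
  have me12 : e₁ * e₂ ∈ O := Submodule.subset_span (by simp)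
  have hOO : O * O ≤ O := by
    rw [hO, Submodule.span_mul_span, Submodule.span_le]
    rintro _ ⟨y, hy, z, hz, rfl⟩
    have p11 : e₁ * e₁ ∈ O := by
      rw [h11]; exact O.sub_mem (O.smul_mem _ me1) (O.smul_mem _ m1)
    have p22 : e₂ * e₂ ∈ O := by rw [h22]; exact O.smul_mem _ m1
    have p21 : e₂ * e₁ ∈ O := by
      rw [h21]; exact O.sub_mem (O.add_mem (O.smul_mem _ m1) (O.smul_mem _ me2)) me12
    have p112 : e₁ * (e₁ * e₂) ∈ O := by
      rw [← mul_assoc, h11, sub_mul, smul_mul_assoc, smul_mul_assoc, one_mul]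
      exact O.sub_mem (O.smul_mem _ me12) (O.smul_mem _ me2)
    have p122 : (e₁ * e₂) * e₂ ∈ O := by
      rw [mul_assoc, h22, mul_smul_comm, mul_one]; exact O.smul_mem _ me1
    have p212 : e₂ * (e₁ * e₂) ∈ O := by
      rw [← mul_assoc, h21, sub_mul, add_mul, smul_mul_assoc, smul_mul_assoc, one_mul, h22]
      exact O.sub_mem (O.add_mem (O.smul_mem _ me2) (O.smul_mem _ (O.smul_mem _ m1))) p122
    have p121 : (e₁ * e₂) * e₁ ∈ O := by
      rw [mul_assoc, h21, mul_sub, mul_add, mul_smul_comm, mul_smul_comm, mul_one]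
      exact O.sub_mem (O.add_mem (O.smul_mem _ me1) (O.smul_mem _ me12)) p112
    have p1212 : (e₁ * e₂) * (e₁ * e₂) ∈ O := by
      have : (e₁ * e₂) * (e₁ * e₂) = m • (e₁ * e₂) + x • (c • e₁) - c • (e₁ * e₁) := by
        have : (e₁ * e₂) * (e₁ * e₂) = e₁ * ((e₂ * e₁) * e₂) := by simp only [mul_assoc]
        rw [this, h21, sub_mul, add_mul, smul_mul_assoc, smul_mul_assoc, one_mul, h22,
          mul_assoc, h22, mul_sub, mul_add]
        simp only [mul_smul_comm, mul_one]
      rw [this]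
      exact O.sub_mem (O.add_mem (O.smul_mem _ me12) (O.smul_mem _ (O.smul_mem _ me1)))
        (O.smul_mem _ p11)
    simp only [Set.mem_insert_iff, Set.mem_singleton_iff] at hy hz
    rcases hy with rfl | rfl | rfl | rfl <;> rcases hz with rfl | rfl | rfl | rfl <;>
      simp only [one_mul, mul_one, SetLike.mem_coe] <;> assumption
  intro y hy z hz
  exact hOO (Submodule.mul_mem_mul hy hz)

end Helpers

theorem stmt_19 (K : Type*) [Field K] [NumberField K]
    (a d : 𝓞 K) (ha : a ≠ 0) (hd : d ≠ 0)
    (x m : 𝓞 K) (hx : (4 : 𝓞 K) ∣ x ^ 2 - a) (hm : a ∣ m ^ 2 + d)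
    (hsqfree : Squarefree (Ideal.span {d} : Ideal (𝓞 K)))
    (hram : ∀ v : HeightOneSpectrum (𝓞 K),
      IsDivisionRingPred ℍ[v.adicCompletion K,
          algebraMap K (v.adicCompletion K) (algebraMap (𝓞 K) K a),
          algebraMap K (v.adicCompletion K) (-(algebraMap (𝓞 K) K d))] ↔
        v.asIdeal ∣ Ideal.span {d}) :
    let A := ℍ[K, algebraMap (𝓞 K) K a, -(algebraMap (𝓞 K) K d)]
    let qi : A := ⟨0, 1, 0, 0⟩
    let qj : A := ⟨0, 0, 1, 0⟩
    let e₁ : A := (2 : K)⁻¹ • (algebraMap K A (algebraMap (𝓞 K) K x) + qi)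
    let e₂ : A := (algebraMap (𝓞 K) K a)⁻¹ • ((algebraMap (𝓞 K) K m) • qi + qi * qj)
    let O : Submodule (𝓞 K) A := Submodule.span (𝓞 K) {1, e₁, e₂, e₁ * e₂}
    (1 : A) ∈ O ∧
    (∀ y ∈ O, ∀ z ∈ O, y * z ∈ O) ∧
    (∀ r : 𝓞 K, algebraMap (𝓞 K) A r ∈ O) ∧
    O.FG ∧
    Submodule.span K (O : Set A) = ⊤ ∧
    (∀ O' : Subalgebra (𝓞 K) A, (O : Set A) ⊆ (O' : Set A) →
      (Subalgebra.toSubmodule O').FG → Subalgebra.toSubmodule O' = O) := by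
  intro A qi qj e₁ e₂ O
  obtain ⟨n, hn⟩ := hx
  obtain ⟨c, hc⟩ := hm
  have hn1 : (algebraMap (𝓞 K) K x) ^ 2 - algebraMap (𝓞 K) K a = 4 * algebraMap (𝓞 K) K n := by
    have := congrArg (algebraMap (𝓞 K) K) hn
    simpa [map_ofNat] using this
  have hc1 : (algebraMap (𝓞 K) K m) ^ 2 + algebraMap (𝓞 K) K d
      = algebraMap (𝓞 K) K a * algebraMap (𝓞 K) K c := by
    have := congrArg (algebraMap (𝓞 K) K) hc
    simpa using this
  have ha1 : algebraMap (𝓞 K) K a ≠ 0 := by simpa using ha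
  have hd1 : algebraMap (𝓞 K) K d ≠ 0 := by simpa using hd
  have he1 : e₁ = ⟨algebraMap (𝓞 K) K x / 2, 1 / 2, 0, 0⟩ := by
    exact he1_lem _ _ _
  have he2 : e₂ = ⟨0, algebraMap (𝓞 K) K m / algebraMap (𝓞 K) K a, 0,
      1 / algebraMap (𝓞 K) K a⟩ := by
    exact he2_lem _ _ _
  obtain ⟨h12, h11, h22, h21⟩ := quat_mult _ _ _ _ _ _ ha1 hn1 hc1 e₁ e₂ he1 he2
  have sm : ∀ (r : 𝓞 K) (y : A), (algebraMap (𝓞 K) K r) • y = r • y :=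
    fun r y => algebraMap_smul K r y
  rw [sm, sm] at h11
  rw [sm] at h22
  rw [sm, sm] at h21
  have m1 : (1 : A) ∈ O := Submodule.subset_span (by simp)
  have me1 : e₁ ∈ O := Submodule.subset_span (by simp)
  have me2 : e₂ ∈ O := Submodule.subset_span (by simp)
  have me12 : e₁ * e₂ ∈ O := Submodule.subset_span (by simp)
  have hcoord : ∀ y : A, ∃ α β γ δ : K, y = α • (1 : A) + β • e₁ + γ • e₂ + δ • (e₁ * e₂) := by
    exact quat_coord _ _ _ _ ha1 e₁ e₂ (e₁ * e₂) he1 he2 h12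
  refine ⟨m1, ?_, ?_, ?_, ?_, ?_⟩
  · exact span_closed x m n c e₁ e₂ h11 h22 h21
  · intro r
    have hr : algebraMap (𝓞 K) A r = r • (1 : A) := Algebra.algebraMap_eq_smul_one r
    rw [hr]
    exact O.smul_mem _ m1
  · exact Submodule.fg_span (by simp)
  · rw [eq_top_iff]
    intro y _
    obtain ⟨α, β, γ, δ, rfl⟩ := hcoord y
    have := fun z (hz : z ∈ O) => Submodule.subset_span (R := K) (s := (O : Set A)) hz
    exact Submodule.add_mem _ (Submodule.add_mem _ (Submodule.add_mem _
      (Submodule.smul_mem _ _ (this _ m1)) (Submodule.smul_mem _ _ (this _ me1)))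
      (Submodule.smul_mem _ _ (this _ me2))) (Submodule.smul_mem _ _ (this _ me12))
  · intro O' hO' hfg
    refine le_antisymm ?_ (fun z hz => hO' hz)
    intro y hy
    have hint : ∀ z ∈ O', IsIntegral (𝓞 K) z := fun z hz => IsIntegral.of_mem_of_fg O' hfg z hz
    have hy : y ∈ O' := hy
    obtain ⟨⟨t0, ht0⟩, ⟨N, hN⟩⟩ := integral_quat (R := 𝓞 K) y (hint y hy)
    obtain ⟨⟨t1, ht1⟩, -⟩ := integral_quat (R := 𝓞 K) _ (hint _ (O'.mul_mem hy (hO' me1)))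
    obtain ⟨⟨t2, ht2⟩, -⟩ := integral_quat (R := 𝓞 K) _ (hint _ (O'.mul_mem hy (hO' me2)))
    obtain ⟨⟨t3, ht3⟩, -⟩ := integral_quat (R := 𝓞 K) _ (hint _ (O'.mul_mem hy (hO' me12)))
    obtain ⟨α, β, γ, δ, hyc⟩ := hcoord y
    obtain ⟨dα, dβ, dγ, dδ, hNf⟩ := quat_dual _ _ _ _ _ _ ha1 hn1 hc1 e₁ e₂ (e₁ * e₂) he1 he2 h12
      y α β γ δ hyc _ _ _ _ _ ht0 ht1 ht2 ht3 hN
    have dα' : algebraMap (𝓞 K) K (-(c * (2 * n * t0 - x * (x * t0 - t1)) + m * (m * t0 - t3)))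
        = algebraMap (𝓞 K) K d * α := by
      rw [← dα]; simp only [map_sub, map_add, map_neg, map_mul, map_ofNat]
    have dβ' : algebraMap (𝓞 K) K (c * (x * t0 - 2 * (x * t0 - t1)) - m * t2)
        = algebraMap (𝓞 K) K d * β := by
      rw [← dβ]; simp only [map_sub, map_mul, map_ofNat]
    have dγ' : algebraMap (𝓞 K) K (- 2 * n * t2 - x * (m * t0 - t3) + m * (x * t0 - t1))
        = algebraMap (𝓞 K) K d * γ := by
      rw [← dγ]; simp only [map_sub, map_add, map_neg, map_mul, map_ofNat]
    have dδ' : algebraMap (𝓞 K) K (x * t2 + 2 * (m * t0 - t3) - m * t0)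
        = algebraMap (𝓞 K) K d * δ := by
      rw [← dδ]; simp only [map_sub, map_add, map_mul, map_ofNat]
    have hall : ∀ v : HeightOneSpectrum (𝓞 K), v.valuation K α ≤ 1 ∧ v.valuation K β ≤ 1 ∧
        v.valuation K γ ≤ 1 ∧ v.valuation K δ ≤ 1 := by
      intro v
      by_cases hv : v.asIdeal ∣ Ideal.span {d}
      · apply local_final K v a d x m n c ha hn hc hsqfree hv ((hram v).mpr hv)
        rw [← hNf]
        exact v.valuation_le_one N
      · have vd : v.valuation K (algebraMap (𝓞 K) K d) = 1 := by
          apply le_antisymm (v.valuation_le_one d)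
          by_contra h
          exact hv ((v.valuation_lt_one_iff_dvd d).mp (not_le.mp h))
        have key : ∀ (r : 𝓞 K) (z : K), algebraMap (𝓞 K) K r = algebraMap (𝓞 K) K d * z →
            v.valuation K z ≤ 1 := by
          intro r z h
          have h1 : v.valuation K (algebraMap (𝓞 K) K r) ≤ 1 := v.valuation_le_one r
          rwa [h, map_mul, vd, one_mul] at h1
        exact ⟨key _ _ dα', key _ _ dβ', key _ _ dγ', key _ _ dδ'⟩
    obtain ⟨α', rfl⟩ := HeightOneSpectrum.mem_integers_of_valuation_le_one K α fun v => (hall v).1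
    obtain ⟨β', rfl⟩ := HeightOneSpectrum.mem_integers_of_valuation_le_one K β fun v => (hall v).2.1
    obtain ⟨γ', rfl⟩ := HeightOneSpectrum.mem_integers_of_valuation_le_one K γ
      fun v => (hall v).2.2.1
    obtain ⟨δ', rfl⟩ := HeightOneSpectrum.mem_integers_of_valuation_le_one K δ
      fun v => (hall v).2.2.2
    rw [hyc, sm, sm, sm, sm]
    exact O.add_mem (O.add_mem (O.add_mem (O.smul_mem _ m1) (O.smul_mem _ me1))
      (O.smul_mem _ me2)) (O.smul_mem _ me12)
end
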